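/- arXiv:2311.06468 — 2 statements merged into one kernel-verified Lean document; each statement's English description precedes it below -/
import Mathlib

section
/- Consider a two-phase three-state quantum walk with finitely many defects and λ ∈ [0,2π) with e^{iλ} ≠ a_x^{(2,2)} and A_x(λ) ≠ 0 for all x ∈ ℤ (so in particular A_{±∞}(λ) ≠ 0). Then e^{iλ} is an eigenvalue of U if and only if: |tr T_{+∞}(λ)| > 2, |tr T_{−∞}(λ)| > 2, and T_{x₊}(λ)T_{x₊−1}(λ)⋯T_{x₋}(λ) v⁻ is parallel to v⁺, i.e. the cross product (T_{[x₋,x₊]} v⁻) × v⁺ = 0, where v⁻ is any eigenvector of T_{−∞}(λ) corresponding to its eigenvalue of modulus > 1, v⁺ is any eigenvector of T_{+∞}(λ) corresponding to its eigenvalue of modulus < 1, and (x₁, x₂) × (y₁, y₂) := x₁y₂ − x₂y₁. -/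
open Complex Matrix ComplexConjugate

noncomputable section

/-- `μ` is an eigenvalue of the time-evolution operator `U = SC` of the three-state
quantum walk on `ℤ` with coin matrices `a x`. -/
def IsQWEigenvalue (a : ℤ → Matrix (Fin 3) (Fin 3) ℂ) (μ : ℂ) : Prop :=
  ∃ Ψ : ℤ → Fin 3 → ℂ, Ψ ≠ 0 ∧
    Summable (fun x : ℤ => ∑ i, ‖Ψ x i‖ ^ 2) ∧
    ∀ x : ℤ,
      μ * Ψ x 0 = ∑ j, a (x + 1) 0 j * Ψ (x + 1) j ∧
      μ * Ψ x 1 = ∑ j, a x 1 j * Ψ x j ∧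
      μ * Ψ x 2 = ∑ j, a (x - 1) 2 j * Ψ (x - 1) j

/-- `A(λ)` for a 3×3 coin matrix `M`. -/
def coefA (M : Matrix (Fin 3) (Fin 3) ℂ) (lam : ℝ) : ℂ :=
  M 0 0 + M 0 1 * M 1 0 / (Complex.exp (lam * Complex.I) - M 1 1)

/-- The transfer matrix `T(λ)` of a 3×3 coin matrix `M`. -/
def transfer (M : Matrix (Fin 3) (Fin 3) ℂ) (lam : ℝ) : Matrix (Fin 2) (Fin 2) ℂ :=
  (M 0 0 * Complex.exp (lam * Complex.I) - M.det * conj (M 2 2))⁻¹ •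
    !![Complex.exp (lam * Complex.I) * (Complex.exp (lam * Complex.I) - M 1 1),
        -(M 0 2 * Complex.exp (lam * Complex.I)) - M.det * conj (M 2 0);
        M 2 0 * Complex.exp (lam * Complex.I) + M.det * conj (M 0 2),
        -(M.det * (Complex.exp (-(lam * Complex.I)) - conj (M 1 1)))]

/-- The ordered product `T_{xm+n} ⋯ T_{xm+1} T_{xm}` of a family of
2×2 matrices. -/
def Tprod (T : ℤ → Matrix (Fin 2) (Fin 2) ℂ) (xm : ℤ) : ℕ → Matrix (Fin 2) (Fin 2) ℂ
  | 0 => T xm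
  | n + 1 => T (xm + (n + 1)) * Tprod T xm n

/-- The cross product `(x₁,x₂) × (y₁,y₂) = x₁y₂ − x₂y₁` on `ℂ²`. -/
def cross (v w : Fin 2 → ℂ) : ℂ := v 0 * w 1 - v 1 * w 0

open Filter Topology

/-! ### Decay of orbits of `2 × 2` matrices -/

lemma eq_zero_of_tendsto_of_geometric {E : Type*} [NormedAddCommGroup E] [NormedSpace ℂ E]
    {w : ℕ → E} {c : ℂ} (hw : ∀ n, w (n + 1) = c • w n) (hc : 1 ≤ ‖c‖)
    (hlim : Tendsto w atTop (𝓝 0)) : w 0 = 0 := by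
  have hle : ∀ n, ‖w 0‖ ≤ ‖w n‖ := by
    intro n
    induction n with
    | zero => exact le_rfl
    | succ n ih =>
      rw [hw, norm_smul]
      exact ih.trans (le_mul_of_one_le_left (norm_nonneg _) hc)
  have h0 : ‖w 0‖ ≤ ‖(0 : E)‖ := ge_of_tendsto' hlim.norm hle
  simpa using h0

lemma exists_charpoly_roots (S : Matrix (Fin 2) (Fin 2) ℂ) :
    ∃ ζ₁ ζ₂ : ℂ, ζ₁ + ζ₂ = S.trace ∧ ζ₁ * ζ₂ = S.det ∧ ‖ζ₂‖ ≤ ‖ζ₁‖ := by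
  obtain ⟨r, hr⟩ := IsAlgClosed.exists_pow_nat_eq (S.trace ^ 2 - 4 * S.det) (n := 2) (by norm_num)
  have hsum : (S.trace + r) / 2 + (S.trace - r) / 2 = S.trace := by ring
  have hprod : (S.trace + r) / 2 * ((S.trace - r) / 2) = S.det := by linear_combination -hr / 4
  rcases le_total ‖(S.trace - r) / 2‖ ‖(S.trace + r) / 2‖ with h | h
  · exact ⟨_, _, hsum, hprod, h⟩
  · exact ⟨_, _, (add_comm _ _).trans hsum, (mul_comm _ _).trans hprod, h⟩

lemma mulVec_mulVec_eq (S : Matrix (Fin 2) (Fin 2) ℂ) (v : Fin 2 → ℂ) :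
    S *ᵥ (S *ᵥ v) = S.trace • (S *ᵥ v) - S.det • v := by
  ext i
  fin_cases i <;>
    simp [mulVec, dotProduct, Fin.sum_univ_two, trace_fin_two, det_fin_two] <;> ring

/-- A decaying orbit of a matrix with determinant of modulus one starts at an eigenvector. -/
lemma eigenvector_of_tendsto_zero {S : Matrix (Fin 2) (Fin 2) ℂ} (hdet : ‖S.det‖ = 1)
    {u : ℕ → Fin 2 → ℂ} (hu : ∀ n, u (n + 1) = S *ᵥ u n) (hlim : Tendsto u atTop (𝓝 0))
    (hu0 : u 0 ≠ 0) : ∃ ζ : ℂ, S *ᵥ u 0 = ζ • u 0 ∧ ‖ζ‖ < 1 := by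
  obtain ⟨ζ₁, ζ₂, hsum, hprod, hle⟩ := exists_charpoly_roots S
  have h1 : 1 ≤ ‖ζ₁‖ := by
    by_contra! h
    have : ‖ζ₁‖ * ‖ζ₂‖ = 1 := by rw [← norm_mul, hprod, hdet]
    nlinarith [norm_nonneg ζ₁, norm_nonneg ζ₂]
  have hzero := eq_zero_of_tendsto_of_geometric (w := fun n => u (n + 1) - ζ₂ • u n) (c := ζ₁)
    (fun n => by
      rw [hu (n + 1), hu n, mulVec_mulVec_eq, ← hsum, ← hprod]
      module) h1
    (by simpa using ((tendsto_add_atTop_iff_nat 1).2 hlim).sub (hlim.const_smul ζ₂))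
  have heig : S *ᵥ u 0 = ζ₂ • u 0 := by rw [← hu]; exact sub_eq_zero.1 hzero
  refine ⟨ζ₂, heig, ?_⟩
  by_contra! h2
  refine hu0 (eq_zero_of_tendsto_of_geometric (c := ζ₂) (fun n => ?_) h2 hlim)
  induction n with
  | zero => rw [hu, heig]
  | succ n ih => rw [hu (n + 1), ih, mulVec_smul, ← hu, ih]

lemma exists_eigenvector_of_root {S : Matrix (Fin 2) (Fin 2) ℂ} {ζ₁ ζ₂ : ℂ}
    (hsum : ζ₁ + ζ₂ = S.trace) (hprod : ζ₁ * ζ₂ = S.det) :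
    ∃ v : Fin 2 → ℂ, v ≠ 0 ∧ S *ᵥ v = ζ₁ • v := by
  have hdet : (S - ζ₁ • (1 : Matrix (Fin 2) (Fin 2) ℂ)).det = 0 := by
    rw [trace_fin_two] at hsum
    rw [det_fin_two] at hprod
    simp only [det_fin_two, Matrix.sub_apply, Matrix.smul_apply, one_apply_eq, smul_eq_mul, ne_eq,
      one_ne_zero, zero_ne_one, not_false_eq_true, one_apply_ne]
    linear_combination ζ₁ * hsum - hprod
  obtain ⟨v, hv, hSv⟩ := exists_mulVec_eq_zero_iff.2 hdet
  refine ⟨v, hv, ?_⟩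
  rw [sub_mulVec, smul_mulVec, one_mulVec] at hSv
  exact sub_eq_zero.1 hSv

lemma exists_hyperbolic_eigenvectors {S : Matrix (Fin 2) (Fin 2) ℂ} (hdet : ‖S.det‖ = 1)
    (htr : 2 < ‖S.trace‖) :
    (∃ (ζ : ℂ) (v : Fin 2 → ℂ), v ≠ 0 ∧ S *ᵥ v = ζ • v ∧ 1 < ‖ζ‖) ∧
      ∃ (ζ : ℂ) (v : Fin 2 → ℂ), v ≠ 0 ∧ S *ᵥ v = ζ • v ∧ ‖ζ‖ < 1 := by
  obtain ⟨ζ₁, ζ₂, hsum, hprod, hle⟩ := exists_charpoly_roots S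
  have hmul : ‖ζ₁‖ * ‖ζ₂‖ = 1 := by rw [← norm_mul, hprod, hdet]
  have hadd : 2 < ‖ζ₁‖ + ‖ζ₂‖ := by
    rw [← hsum] at htr
    exact htr.trans_le (norm_add_le _ _)
  have h1 : 1 < ‖ζ₁‖ := by linarith
  have h2 : ‖ζ₂‖ < 1 := by nlinarith [norm_nonneg ζ₂]
  obtain ⟨v, hv, hSv⟩ := exists_eigenvector_of_root hsum hprod
  obtain ⟨w, hw, hSw⟩ := exists_eigenvector_of_root
    ((add_comm _ _).trans hsum) ((mul_comm _ _).trans hprod)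
  exact ⟨⟨ζ₁, v, hv, hSv, h1⟩, ζ₂, w, hw, hSw, h2⟩

/-- If `conj (tr S) * det S = tr S`, an eigenvalue off the unit circle forces `|tr S| > 2`. -/
lemma two_lt_norm_trace {S : Matrix (Fin 2) (Fin 2) ℂ} (hdet : ‖S.det‖ = 1)
    (hconj : conj S.trace * S.det = S.trace) {ζ : ℂ} {v : Fin 2 → ℂ} (hv : v ≠ 0)
    (hSv : S *ᵥ v = ζ • v) (hζ : ‖ζ‖ ≠ 1) : 2 < ‖S.trace‖ := by
  have hroot : ζ * (S.trace - ζ) = S.det := by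
    have h := mulVec_mulVec_eq S v
    rw [hSv, mulVec_smul, hSv] at h
    have h' : (ζ * (S.trace - ζ) - S.det) • v = 0 := by
      rw [sub_smul, mul_smul, sub_smul, smul_sub, h, smul_comm ζ S.trace v]
      abel
    exact sub_eq_zero.1 ((smul_eq_zero.1 h').resolve_right hv)
  obtain ⟨η, hη⟩ : ∃ η, η = S.trace - ζ := ⟨_, rfl⟩
  have hsum : S.trace = ζ + η := by rw [hη]; ring
  rw [← hη] at hroot
  have hmul : ‖ζ‖ * ‖η‖ = 1 := by rw [← norm_mul, hroot, hdet]
  rw [hsum, ← hroot, map_add] at hconj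
  have hr : (‖ζ‖ ^ 2 - 1 : ℂ) * η = (1 - ‖η‖ ^ 2 : ℂ) * ζ := by
    rw [← Complex.mul_conj', ← Complex.mul_conj']
    linear_combination hconj
  have hζ0 : 0 < ‖ζ‖ := by
    rcases (norm_nonneg ζ).eq_or_lt with h | h
    · rw [← h, zero_mul] at hmul; exact absurd hmul zero_ne_one
    · exact h
  have hmulC : (‖ζ‖ : ℂ) * ‖η‖ = 1 := by exact_mod_cast hmul
  have hne : (‖ζ‖ ^ 2 - 1 : ℂ) ≠ 0 := by
    intro h
    have h' : ‖ζ‖ ^ 2 = 1 := by exact_mod_cast sub_eq_zero.1 h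
    exact hζ ((pow_eq_one_iff_of_nonneg hζ0.le two_ne_zero).1 h')
  have hζη : ζ = (‖ζ‖ ^ 2 : ℂ) * η := by
    apply mul_left_cancel₀ hne
    linear_combination (-(‖ζ‖ : ℂ) ^ 2) * hr + ((‖ζ‖ : ℂ) * ‖η‖ + 1) * ζ * hmulC
  have htr : ‖S.trace‖ = ‖ζ‖ + ‖η‖ := by
    have h : ζ + η = ((‖ζ‖ ^ 2 + 1 : ℝ) : ℂ) * η := by push_cast; linear_combination hζη
    rw [hsum, h, norm_mul, Complex.norm_real, Real.norm_of_nonneg (by positivity)]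
    linear_combination ‖ζ‖ * hmul
  rw [htr]
  nlinarith [sq_pos_of_ne_zero (sub_ne_zero.2 hζ), norm_nonneg η]

/-! ### The cross product -/

lemma cross_mulVec (S : Matrix (Fin 2) (Fin 2) ℂ) (v w : Fin 2 → ℂ) :
    cross (S *ᵥ v) (S *ᵥ w) = S.det * cross v w := by
  simp only [cross, mulVec, dotProduct, Fin.sum_univ_two, det_fin_two]
  ring

lemma cross_smul_left (c : ℂ) (v w : Fin 2 → ℂ) : cross (c • v) w = c * cross v w := by
  simp only [cross, Pi.smul_apply, smul_eq_mul]
  ring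

lemma cross_smul_right (c : ℂ) (v w : Fin 2 → ℂ) : cross v (c • w) = c * cross v w := by
  simp only [cross, Pi.smul_apply, smul_eq_mul]
  ring

lemma exists_smul_of_cross_eq_zero {v w : Fin 2 → ℂ} (h : cross v w = 0) (hw : w ≠ 0) :
    ∃ c : ℂ, v = c • w := by
  rw [cross, sub_eq_zero] at h
  by_cases h0 : w 0 = 0
  · have h1 : w 1 ≠ 0 := fun h1 => hw (by ext i; fin_cases i <;> assumption)
    refine ⟨v 1 / w 1, ?_⟩
    ext i
    fin_cases i
    · simpa [h0, h1] using h
    · simp [h1]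
  · refine ⟨v 0 / w 0, ?_⟩
    ext i
    fin_cases i
    · simp [h0]
    · simp only [Fin.mk_one, Pi.smul_apply, smul_eq_mul]
      field_simp
      linear_combination -h

lemma cross_eigenvectors_eq_zero {S : Matrix (Fin 2) (Fin 2) ℂ} (hdet : ‖S.det‖ = 1)
    {ζ η : ℂ} {v w : Fin 2 → ℂ} (hv : S *ᵥ v = ζ • v) (hw : S *ᵥ w = η • w)
    (hne : ‖ζ‖ * ‖η‖ ≠ 1) : cross v w = 0 := by
  have h := cross_mulVec S v w
  rw [hv, hw, cross_smul_left, cross_smul_right] at h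
  have h' := congrArg norm h
  rw [norm_mul, norm_mul, norm_mul, hdet, one_mul, ← mul_assoc] at h'
  by_contra h0
  exact hne (mul_right_cancel₀ (norm_ne_zero_iff.2 h0) (h'.trans (one_mul _).symm))

/-! ### The transfer matrix -/

lemma adjugate_eq_det_smul_star {n : Type*} [Fintype n] [DecidableEq n] {M : Matrix n n ℂ}
    (hM : M ∈ unitaryGroup n ℂ) : M.adjugate = M.det • star M := by
  calc M.adjugate = M.adjugate * (M * star M) := by rw [mem_unitaryGroup_iff.1 hM, mul_one]
    _ = M.det • star M := by rw [← mul_assoc, adjugate_mul, smul_mul_assoc, one_mul]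

lemma conj_det_mul_det {n : Type*} [Fintype n] [DecidableEq n] {M : Matrix n n ℂ}
    (hM : M ∈ unitaryGroup n ℂ) : conj M.det * M.det = 1 := by
  simpa using Unitary.star_mul_self_of_mem (det_of_mem_unitary hM)

/-- The denominator `a₁₁ e^{iλ} - det M * conj a₃₃` of the transfer matrix. -/
def transferDenom (M : Matrix (Fin 3) (Fin 3) ℂ) (μ : ℂ) : ℂ := M 0 0 * μ - M.det * conj (M 2 2)

lemma conj_exp_mul_I (lam : ℝ) :
    conj (Complex.exp (lam * Complex.I)) = (Complex.exp (lam * Complex.I))⁻¹ := by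
  rw [← Complex.exp_conj, ← Complex.exp_neg]
  simp

section Transfer

variable {M : Matrix (Fin 3) (Fin 3) ℂ} {lam : ℝ}

lemma transferDenom_eq (hM : M ∈ unitaryGroup (Fin 3) ℂ) (μ : ℂ) :
    transferDenom M μ = M 0 0 * (μ - M 1 1) + M 0 1 * M 1 0 := by
  have h := congrFun₂ (adjugate_eq_det_smul_star hM) 2 2
  simp [adjugate_fin_three] at h
  rw [transferDenom]
  linear_combination h

lemma transferDenom_ne_zero (hM : M ∈ unitaryGroup (Fin 3) ℂ)
    (hne : Complex.exp (lam * Complex.I) ≠ M 1 1) (hA : coefA M lam ≠ 0) :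
    transferDenom M (Complex.exp (lam * Complex.I)) ≠ 0 := by
  rw [transferDenom_eq hM]
  have h : Complex.exp (lam * Complex.I) - M 1 1 ≠ 0 := sub_ne_zero.2 hne
  rw [coefA] at hA
  contrapose! hA
  field_simp
  linear_combination hA

lemma transfer_eq (hM : M ∈ unitaryGroup (Fin 3) ℂ) {μ : ℂ}
    (hμ : Complex.exp (lam * Complex.I) = μ) :
    transfer M lam = (transferDenom M μ)⁻¹ •
      !![μ * (μ - M 1 1), -(M 0 2 * (μ - M 1 1) + M 0 1 * M 1 2);
        M 2 0 * (μ - M 1 1) + M 2 1 * M 1 0,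
        -(M.det * μ⁻¹ - (M 0 0 * M 2 2 - M 0 2 * M 2 0))] := by
  have h02 := congrFun₂ (adjugate_eq_det_smul_star hM) 0 2
  have h11 := congrFun₂ (adjugate_eq_det_smul_star hM) 1 1
  have h20 := congrFun₂ (adjugate_eq_det_smul_star hM) 2 0
  simp [adjugate_fin_three] at h02 h11 h20
  rw [transfer, Complex.exp_neg, hμ, transferDenom]
  congr 1
  ext i j
  fin_cases i <;> fin_cases j <;> simp
  · linear_combination h02
  · linear_combination -h20
  · linear_combination -h11

lemma det_transfer (hM : M ∈ unitaryGroup (Fin 3) ℂ)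
    (hd : transferDenom M (Complex.exp (lam * Complex.I)) ≠ 0) :
    (transfer M lam).det = -(M.det * Complex.exp (lam * Complex.I) *
      conj (transferDenom M (Complex.exp (lam * Complex.I)))) /
        transferDenom M (Complex.exp (lam * Complex.I)) := by
  have hconjd : conj (transferDenom M (Complex.exp (lam * Complex.I))) =
      conj (M 0 0) * (Complex.exp (lam * Complex.I))⁻¹ - conj M.det * M 2 2 := by
    simp [transferDenom, conj_exp_mul_I]
  have hμ0 := Complex.exp_ne_zero (lam * Complex.I)
  rw [transfer_eq hM rfl, hconjd]
  generalize Complex.exp (lam * Complex.I) = μ at hd hμ0 ⊢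
  have h00 := congrFun₂ (adjugate_eq_det_smul_star hM) 0 0
  simp [adjugate_fin_three] at h00
  have hdet := conj_det_mul_det hM
  have hnum : -(M.det * μ * (conj (M 0 0) * μ⁻¹ - conj M.det * M 2 2)) =
      M 2 2 * μ - (M 1 1 * M 2 2 - M 1 2 * M 2 1) := by
    have hμ := mul_inv_cancel₀ hμ0
    linear_combination (M 2 2 * μ) * hdet + h00 - M.det * conj (M 0 0) * hμ
  rw [hnum, det_smul, det_fin_two_of, Fintype.card_fin, eq_div_iff hd]
  field_simp
  rw [transferDenom_eq hM, det_fin_three]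
  ring

lemma norm_det_transfer (hM : M ∈ unitaryGroup (Fin 3) ℂ)
    (hd : transferDenom M (Complex.exp (lam * Complex.I)) ≠ 0) :
    ‖(transfer M lam).det‖ = 1 := by
  have hdet : ‖M.det‖ = 1 := CStarRing.norm_of_mem_unitary (det_of_mem_unitary hM)
  rw [det_transfer hM hd, norm_div, norm_neg, norm_mul, norm_mul, hdet,
    Complex.norm_exp_ofReal_mul_I, RCLike.norm_conj, one_mul, one_mul,
    div_self (norm_ne_zero_iff.2 hd)]

lemma conj_trace_transfer (hM : M ∈ unitaryGroup (Fin 3) ℂ)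
    (hd : transferDenom M (Complex.exp (lam * Complex.I)) ≠ 0) :
    conj (transfer M lam).trace * (transfer M lam).det = (transfer M lam).trace := by
  rw [det_transfer hM hd]
  have hdc := (map_ne_zero (starRingEnd ℂ)).2 hd
  have hμ0 := Complex.exp_ne_zero (lam * Complex.I)
  have htr : (transfer M lam).trace = (transferDenom M (Complex.exp (lam * Complex.I)))⁻¹ *
      (Complex.exp (lam * Complex.I) * (Complex.exp (lam * Complex.I) - M 1 1) -
        M.det * ((Complex.exp (lam * Complex.I))⁻¹ - conj (M 1 1))) := by
    rw [transfer, trace_fin_two, transferDenom, Complex.exp_neg]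
    simp
    ring
  have hdet := conj_det_mul_det hM
  rw [htr]
  simp only [map_mul, map_sub, map_inv₀, conj_exp_mul_I, Complex.conj_conj, inv_inv]
  generalize Complex.exp (lam * Complex.I) = μ at hd hdc hμ0 ⊢
  field_simp
  linear_combination (μ ^ 2 * (μ - M 1 1)) * hdet

/-- The eigenvalue equation at a single site, in terms of the transfer matrix. -/
lemma site_equations_iff (hM : M ∈ unitaryGroup (Fin 3) ℂ)
    (hne : Complex.exp (lam * Complex.I) ≠ M 1 1)
    (hd : transferDenom M (Complex.exp (lam * Complex.I)) ≠ 0) (p s : ℂ) (ψ : Fin 3 → ℂ) :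
    (Complex.exp (lam * Complex.I) * p = ∑ j, M 0 j * ψ j ∧
      Complex.exp (lam * Complex.I) * ψ 1 = ∑ j, M 1 j * ψ j ∧
      Complex.exp (lam * Complex.I) * s = ∑ j, M 2 j * ψ j) ↔
    (![ψ 0, s] = transfer M lam *ᵥ ![p, ψ 2] ∧
      ψ 1 = (M 1 0 * ψ 0 + M 1 2 * ψ 2) / (Complex.exp (lam * Complex.I) - M 1 1)) := by
  have hμ0 := Complex.exp_ne_zero (lam * Complex.I)
  rw [transfer_eq hM rfl]
  generalize Complex.exp (lam * Complex.I) = μ at hne hd hμ0 ⊢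
  have he : μ - M 1 1 ≠ 0 := sub_ne_zero.2 hne
  have hdeq := transferDenom_eq hM μ
  generalize transferDenom M μ = d at hd hdeq ⊢
  have hvec : ![ψ 0, s] = (d⁻¹ • !![μ * (μ - M 1 1), -(M 0 2 * (μ - M 1 1) + M 0 1 * M 1 2);
        M 2 0 * (μ - M 1 1) + M 2 1 * M 1 0,
        -(M.det * μ⁻¹ - (M 0 0 * M 2 2 - M 0 2 * M 2 0))]) *ᵥ ![p, ψ 2] ↔
      d * ψ 0 = μ * (μ - M 1 1) * p - (M 0 2 * (μ - M 1 1) + M 0 1 * M 1 2) * ψ 2 ∧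
      d * (μ * s) = μ * (M 2 0 * (μ - M 1 1) + M 2 1 * M 1 0) * p -
        (M.det - μ * (M 0 0 * M 2 2 - M 0 2 * M 2 0)) * ψ 2 := by
    rw [smul_mulVec, eq_inv_smul_iff₀ hd, funext_iff, Fin.forall_fin_two]
    refine and_congr ?_ ?_
    · simp only [Pi.smul_apply, cons_val_zero, smul_eq_mul, mulVec, dotProduct,
        Fin.sum_univ_two, of_apply, cons_val', cons_val_one, cons_val_fin_one, neg_mul,
        ← sub_eq_add_neg]
    · simp only [Pi.smul_apply, cons_val_one, cons_val_fin_one, smul_eq_mul, mulVec, dotProduct,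
        Fin.sum_univ_two, of_apply, cons_val', cons_val_zero]
      constructor <;> intro h
      · rw [mul_left_comm, h]
        field_simp
        ring
      · apply mul_left_cancel₀ hμ0
        rw [mul_left_comm, h]
        field_simp
        ring
  have hdet := det_fin_three M
  rw [hvec, eq_div_iff he]
  simp only [Fin.sum_univ_three]
  constructor
  · rintro ⟨h0, h1, h2⟩
    have hy : ψ 1 * (μ - M 1 1) = M 1 0 * ψ 0 + M 1 2 * ψ 2 := by linear_combination h1
    have h3 : d * ψ 0 = μ * (μ - M 1 1) * p -
        (M 0 2 * (μ - M 1 1) + M 0 1 * M 1 2) * ψ 2 := by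
      rw [hdeq]
      linear_combination -(μ - M 1 1) * h0 - M 0 1 * hy
    refine ⟨⟨h3, ?_⟩, hy⟩
    apply mul_left_cancel₀ he
    rw [hdet]
    linear_combination (μ - M 1 1) * d * h2 + d * M 2 1 * hy +
      (M 2 0 * (μ - M 1 1) + M 2 1 * M 1 0) * h3 +
      (M 2 1 * M 1 2 + M 2 2 * (μ - M 1 1)) * ψ 2 * hdeq
  · rintro ⟨⟨h3, h4⟩, hy⟩
    refine ⟨?_, by linear_combination hy, ?_⟩
    · apply mul_left_cancel₀ he
      rw [hdeq] at h3
      linear_combination -h3 - M 0 1 * hy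
    · apply mul_left_cancel₀ hd
      apply mul_left_cancel₀ he
      rw [hdet] at h4
      linear_combination (μ - M 1 1) * h4 - d * M 2 1 * hy -
        (M 2 0 * (μ - M 1 1) + M 2 1 * M 1 0) * h3 -
        (M 2 1 * M 1 2 + M 2 2 * (μ - M 1 1)) * ψ 2 * hdeq

end Transfer

/-! ### Sequences on the integers -/

lemma summable_int_of_half_lines {f : ℤ → ℝ} {m p : ℤ} (hmp : m ≤ p)
    (hp : Summable fun n : ℕ => f (p + n)) (hm : Summable fun n : ℕ => f (m - n)) :
    Summable f := by
  rw [← (Equiv.addLeft p).summable_iff]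
  refine Summable.of_nat_of_neg hp ?_
  rw [← summable_nat_add_iff (p - m).toNat]
  refine hm.congr fun n => ?_
  simp only [Function.comp_apply, Equiv.coe_addLeft]
  congr 1
  push_cast
  rw [Int.toNat_of_nonneg (by omega)]
  ring

lemma summable_norm_sq_of_geometric {ψ : ℕ → Fin 3 → ℂ} {c : ℂ} {w : Fin 3 → ℂ}
    (h : ∀ n, ψ n = c ^ n • w) (hc : ‖c‖ < 1) : Summable fun n => ∑ i, ‖ψ n i‖ ^ 2 := by
  have hg : Summable fun n : ℕ => (‖c‖ ^ 2) ^ n :=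
    summable_geometric_of_lt_one (by positivity) (pow_lt_one₀ (norm_nonneg c) hc two_ne_zero)
  refine (hg.mul_right (∑ i, ‖w i‖ ^ 2)).congr fun n => ?_
  rw [Finset.mul_sum]
  refine Finset.sum_congr rfl fun i _ => ?_
  rw [h, Pi.smul_apply, norm_smul, norm_pow]
  ring

lemma tendsto_cofinite_of_summable_norm_sq {Ψ : ℤ → Fin 3 → ℂ}
    (h : Summable fun x => ∑ i, ‖Ψ x i‖ ^ 2) (i : Fin 3) :
    Tendsto (fun x => Ψ x i) cofinite (𝓝 0) := by
  have hi : Tendsto (fun x => ‖Ψ x i‖ ^ 2) cofinite (𝓝 0) :=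
    squeeze_zero (fun x => by positivity)
      (fun x => Finset.single_le_sum (f := fun i => ‖Ψ x i‖ ^ 2) (fun _ _ => by positivity)
        (Finset.mem_univ i)) h.tendsto_cofinite_zero
  rw [tendsto_zero_iff_norm_tendsto_zero]
  simpa [Real.sqrt_sq] using hi.sqrt

/-- A solution of `Φ (x + 1) = T x *ᵥ Φ x` satisfies `Φ (m + n + 1) = T_{m+n} ⋯ T_m *ᵥ Φ m`. -/
lemma Tprod_mulVec {T : ℤ → Matrix (Fin 2) (Fin 2) ℂ} {Φ : ℤ → Fin 2 → ℂ} {m : ℤ}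
    (hΦ : ∀ x, m ≤ x → Φ (x + 1) = T x *ᵥ Φ x) (n : ℕ) :
    Φ (m + n + 1) = Tprod T m n *ᵥ Φ m := by
  induction n with
  | zero => simpa [Tprod] using hΦ m le_rfl
  | succ n ih =>
    rw [Tprod, ← mulVec_mulVec, ← ih, hΦ _ (by omega)]
    push_cast
    simp only [add_assoc]

/-- The solution of `Φ (m + n + 1) = T (m + n) *ᵥ Φ (m + n)` starting at `v`, as a sequence in
`n`. -/
def orbitFrom (T : ℤ → Matrix (Fin 2) (Fin 2) ℂ) (m : ℤ) (v : Fin 2 → ℂ) : ℕ → Fin 2 → ℂ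
  | 0 => v
  | n + 1 => T (m + n) *ᵥ orbitFrom T m v n

/-- An eigenvector of the constant left tail of `T` extends to a two-sided solution. -/
lemma exists_solution_of_left_eigenvector {T : ℤ → Matrix (Fin 2) (Fin 2) ℂ} {m : ℤ}
    {S : Matrix (Fin 2) (Fin 2) ℂ} (hT : ∀ x, x < m → T x = S) {ζ : ℂ} (hζ : ζ ≠ 0)
    {v : Fin 2 → ℂ} (hv : S *ᵥ v = ζ • v) :
    ∃ Φ : ℤ → Fin 2 → ℂ, (∀ x, Φ (x + 1) = T x *ᵥ Φ x) ∧
      ∀ n : ℕ, Φ (m - n) = ζ⁻¹ ^ n • v := by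
  have hleft : ∀ x : ℤ, x ≤ m →
      (if m ≤ x then orbitFrom T m v (x - m).toNat else ζ ^ (x - m) • v) = ζ ^ (x - m) • v := by
    intro x hx
    split_ifs with h
    · obtain rfl : x = m := le_antisymm hx h
      simp [orbitFrom]
    · rfl
  refine ⟨fun x => if m ≤ x then orbitFrom T m v (x - m).toNat else ζ ^ (x - m) • v,
    fun x => ?_, fun n => ?_⟩
  · rcases lt_or_ge x m with hx | hx
    · beta_reduce
      rw [hleft _ (by omega), hleft _ hx.le, hT x hx, mulVec_smul, hv, smul_smul,
        ← zpow_add_one₀ hζ]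
      congr 2
      ring
    · beta_reduce
      rw [if_pos hx, if_pos (by omega), show (x + 1 - m).toNat = (x - m).toNat + 1 by omega,
        orbitFrom, show m + ((x - m).toNat : ℤ) = x by omega]
  · beta_reduce
    rw [hleft _ (by omega), show m - (n : ℤ) - m = -(n : ℤ) by ring, _root_.zpow_neg, zpow_natCast,
      inv_pow]


/-- for a two-phase walk with finitely many defects (and `A_x(λ) ≠ 0`
everywhere), `e^{iλ}` is an eigenvalue of `U` iff `|tr T_{±∞}(λ)| > 2` and
`(T_{[x₋,x₊]} v⁻) × v⁺ = 0` for eigenvectors `v⁻` (modulus-`>1` eigenvalue of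
`T_{−∞}(λ)`) and `v⁺` (modulus-`<1` eigenvalue of `T_{+∞}(λ)`). -/
theorem two_phase_defects_eigenvalue_iff_cross (a : ℤ → Matrix (Fin 3) (Fin 3) ℂ)
    (hunit : ∀ x, a x ∈ Matrix.unitaryGroup (Fin 3) ℂ)
    (h13 : ∀ x, ‖a x 0 2‖ ≠ 1) (h22 : ∀ x, ‖a x 1 1‖ ≠ 1) (h31 : ∀ x, ‖a x 2 0‖ ≠ 1)
    (xp xm : ℤ) (hxp : 0 ≤ xp) (hxm : xm < 0)
    (Cp Cm : Matrix (Fin 3) (Fin 3) ℂ)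
    (hCp : ∀ x, xp ≤ x → a x = Cp) (hCm : ∀ x, x < xm → a x = Cm)
    (lam : ℝ) (hlam : lam ∈ Set.Ico 0 (2 * Real.pi))
    (hne : ∀ x, Complex.exp (lam * Complex.I) ≠ a x 1 1)
    (hA : ∀ x, coefA (a x) lam ≠ 0)
    (hAp : coefA Cp lam ≠ 0) (hAm : coefA Cm lam ≠ 0) :
    IsQWEigenvalue a (Complex.exp (lam * Complex.I)) ↔
      (2 < ‖(transfer Cp lam).trace‖ ∧ 2 < ‖(transfer Cm lam).trace‖ ∧
        ∀ (ζm ζp : ℂ) (vm vp : Fin 2 → ℂ),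
          vm ≠ 0 → (transfer Cm lam).mulVec vm = ζm • vm → 1 < ‖ζm‖ →
          vp ≠ 0 → (transfer Cp lam).mulVec vp = ζp • vp → ‖ζp‖ < 1 →
          cross ((Tprod (fun y => transfer (a y) lam) xm (xp - xm).toNat).mulVec vm)
            vp = 0) := by
  obtain rfl : a xp = Cp := hCp xp le_rfl
  obtain rfl : a (xm - 1) = Cm := hCm (xm - 1) (by omega)
  have hd : ∀ x, transferDenom (a x) (Complex.exp (lam * Complex.I)) ≠ 0 := fun x =>
    transferDenom_ne_zero (hunit x) (hne x) (hA x)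
  have hdet : ∀ x, ‖(transfer (a x) lam).det‖ = 1 := fun x => norm_det_transfer (hunit x) (hd x)
  have hconj : ∀ x, conj (transfer (a x) lam).trace * (transfer (a x) lam).det =
      (transfer (a x) lam).trace := fun x => conj_trace_transfer (hunit x) (hd x)
  have hunitDet : ∀ x, IsUnit (transfer (a x) lam).det := fun x =>
    isUnit_iff_ne_zero.2 (norm_ne_zero_iff.1 (by rw [hdet]; exact one_ne_zero))
  have hTprod : ∀ Φ : ℤ → Fin 2 → ℂ, (∀ x, Φ (x + 1) = transfer (a x) lam *ᵥ Φ x) →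
      Φ (xp + 1) = Tprod (fun y => transfer (a y) lam) xm (xp - xm).toNat *ᵥ Φ xm := by
    intro Φ hΦ
    rw [← Tprod_mulVec (fun x _ => hΦ x), show xm + ((xp - xm).toNat : ℤ) = xp by omega]
  constructor
  · rintro ⟨Ψ, hΨ0, hsum, heq⟩
    have hlim := tendsto_cofinite_of_summable_norm_sq hsum
    obtain ⟨Φ, hΦdef⟩ : ∃ Φ : ℤ → Fin 2 → ℂ, ∀ x, Φ x = ![Ψ (x - 1) 0, Ψ x 2] := ⟨_, fun _ => rfl⟩
    have hsite : ∀ x, Φ (x + 1) = transfer (a x) lam *ᵥ Φ x ∧ Ψ x 1 =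
        (a x 1 0 * Ψ x 0 + a x 1 2 * Ψ x 2) / (Complex.exp (lam * Complex.I) - a x 1 1) := by
      intro x
      have h0 := (heq (x - 1)).1
      have h2 := (heq (x + 1)).2.2
      rw [sub_add_cancel] at h0
      rw [add_sub_cancel_right] at h2
      have h := (site_equations_iff (hunit x) (hne x) (hd x) _ _ (Ψ x)).1 ⟨h0, (heq x).2.1, h2⟩
      rwa [hΦdef, hΦdef, add_sub_cancel_right]
    have hΦ := fun x => (hsite x).1
    have hinv : ∀ x, (transfer (a x) lam)⁻¹ *ᵥ Φ (x + 1) = Φ x := fun x => by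
      rw [hΦ, mulVec_mulVec, nonsing_inv_mul _ (hunitDet x), one_mulVec]
    have hΦlim : ∀ f : ℕ → ℤ, Function.Injective f → Tendsto (fun n => Φ (f n)) atTop (𝓝 0) := by
      intro f hf
      rw [← Nat.cofinite_eq_atTop]
      have hf' : Function.Injective fun n => f n - 1 := fun m n h => hf (sub_left_injective h)
      refine tendsto_pi_nhds.2 (Fin.forall_fin_two.2 ⟨?_, ?_⟩)
      · simpa [hΦdef, Function.comp_def] using (hlim 0).comp hf'.tendsto_cofinite
      · simpa [hΦdef, Function.comp_def] using (hlim 2).comp hf.tendsto_cofinite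
    have hΦstep : ∀ x, Φ x = 0 ↔ Φ (x + 1) = 0 := fun x =>
      ⟨fun h => by rw [hΦ, h, mulVec_zero], fun h => by rw [← hinv, h, mulVec_zero]⟩
    have hΦne : ∀ y, Φ y ≠ 0 := by
      intro y hy
      have hall : ∀ x, Φ x = 0 := by
        intro x
        induction x using Int.inductionOn' (b := y) with
        | zero => exact hy
        | succ k _ ih => exact (hΦstep k).1 ih
        | pred k _ ih => exact (hΦstep (k - 1)).2 (by rwa [sub_add_cancel])
      have hzero : ∀ x, Ψ x 0 = 0 ∧ Ψ x 2 = 0 := by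
        intro x
        have h0 := congrFun (hall (x + 1)) 0
        have h2 := congrFun (hall x) 1
        rw [hΦdef] at h0 h2
        simpa using And.intro h0 h2
      refine hΨ0 (funext fun x => funext fun i => ?_)
      fin_cases i
      · exact (hzero x).1
      · simpa [hzero x] using (hsite x).2
      · exact (hzero x).2
    obtain ⟨ζp, hζp, hζp1⟩ := eigenvector_of_tendsto_zero (S := transfer (a xp) lam) (hdet xp)
      (u := fun n : ℕ => Φ (xp + 1 + n))
      (fun n => by
        rw [← hCp (xp + 1 + n) (by omega), ← hΦ]
        push_cast
        simp only [add_assoc])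
      (hΦlim _ fun m n h => by simpa using h) (hΦne _)
    obtain ⟨η, hη, hη1⟩ := eigenvector_of_tendsto_zero (S := (transfer (a (xm - 1)) lam)⁻¹)
      (by rw [det_nonsing_inv, Ring.inverse_eq_inv', norm_inv, hdet, inv_one])
      (u := fun n : ℕ => Φ (xm - n))
      (fun n => by
        rw [← hCm (xm - n - 1) (by omega)]
        have h := hinv (xm - n - 1)
        rw [sub_add_cancel] at h
        rw [h]
        push_cast
        simp only [sub_sub])
      (hΦlim _ fun m n h => by simpa using h) (hΦne _)
    simp only [Nat.cast_zero, add_zero, sub_zero] at hζp hη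
    have hη0 : η ≠ 0 := by
      rintro rfl
      have h := congrArg (transfer (a (xm - 1)) lam *ᵥ ·) hη
      simp only [mulVec_mulVec, mul_nonsing_inv _ (hunitDet _), one_mulVec, zero_smul,
        mulVec_zero] at h
      exact hΦne _ h
    have hζm : transfer (a (xm - 1)) lam *ᵥ Φ xm = η⁻¹ • Φ xm := by
      rw [eq_inv_smul_iff₀ hη0, ← mulVec_smul, ← hη, mulVec_mulVec,
        mul_nonsing_inv _ (hunitDet _), one_mulVec]
    have hζm1 : 1 < ‖η⁻¹‖ := by
      rw [norm_inv]
      exact (one_lt_inv₀ (norm_pos_iff.2 hη0)).2 hη1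
    refine ⟨two_lt_norm_trace (hdet _) (hconj _) (hΦne _) hζp hζp1.ne,
      two_lt_norm_trace (hdet _) (hconj _) (hΦne _) hζm hζm1.ne', ?_⟩
    intro ζm' ζp' vm vp _ hvm hζm' _ hvp hζp'
    obtain ⟨c, rfl⟩ := exists_smul_of_cross_eq_zero
      (cross_eigenvectors_eq_zero (hdet _) hvm hζm (by nlinarith)) (hΦne _)
    rw [mulVec_smul, cross_smul_left, ← hTprod Φ hΦ,
      cross_eigenvectors_eq_zero (hdet _) hζp hvp
        (by nlinarith [norm_nonneg ζp, norm_nonneg ζp']), mul_zero]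
  · rintro ⟨htrp, htrm, hcross⟩
    obtain ⟨ζm, vm, hvm0, hvm, hζm⟩ := (exists_hyperbolic_eigenvectors (hdet _) htrm).1
    obtain ⟨ζp, vp, hvp0, hvp, hζp⟩ := (exists_hyperbolic_eigenvectors (hdet _) htrp).2
    have hζm0 : ζm ≠ 0 := norm_pos_iff.1 (zero_lt_one.trans hζm)
    obtain ⟨Φ, hΦ, hΦm⟩ := exists_solution_of_left_eigenvector
      (T := fun x => transfer (a x) lam) (m := xm) (fun x hx => by simp only [hCm x hx]) hζm0 hvm
    have hΦxm : Φ xm = vm := by simpa using hΦm 0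
    have hΦxp : cross (Φ (xp + 1)) vp = 0 := by
      rw [hTprod Φ hΦ, hΦxm]
      exact hcross ζm ζp vm vp hvm0 hvm hζm hvp0 hvp hζp
    obtain ⟨c, hc⟩ := exists_smul_of_cross_eq_zero hΦxp hvp0
    have hΦp : ∀ n : ℕ, Φ (xp + 1 + n) = ζp ^ n • Φ (xp + 1) := by
      intro n
      induction n with
      | zero => simp
      | succ n ih =>
        rw [Nat.cast_succ, ← add_assoc, hΦ, hCp _ (by omega), ih, mulVec_smul, hc, mulVec_smul,
          hvp, pow_succ]
        module
    obtain ⟨R, hR⟩ : ∃ R : Matrix (Fin 3) (Fin 3) ℂ → ℂ → ℂ → Fin 3 → ℂ, ∀ M q r, R M q r =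
        ![q, (M 1 0 * q + M 1 2 * r) / (Complex.exp (lam * Complex.I) - M 1 1), r] :=
      ⟨_, fun _ _ _ => rfl⟩
    have hRsmul : ∀ M k q r, R M (k * q) (k * r) = k • R M q r := by
      intro M k q r
      ext i
      fin_cases i <;> simp [hR]
      ring
    have hsite : ∀ x, _ := fun x =>
      (site_equations_iff (hunit x) (hne x) (hd x) (Φ x 0) (Φ (x + 1) 1)
        (R (a x) (Φ (x + 1) 0) (Φ x 1))).2 (by
          refine ⟨?_, by simp [hR]⟩
          simp only [hR, cons_val]
          convert hΦ x using 1
          · ext i; fin_cases i <;> rfl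
          · congr 1
            ext i; fin_cases i <;> rfl)
    refine ⟨fun x => R (a x) (Φ (x + 1) 0) (Φ x 1), ?_, ?_, fun x => ⟨?_, (hsite x).2.1, ?_⟩⟩
    · intro h
      have h0 := congrFun₂ h (xm - 1) 0
      have h1 := congrFun₂ h xm 2
      simp only [hR, sub_add_cancel, hΦxm, cons_val, Pi.zero_apply] at h0 h1
      exact hvm0 (by ext i; fin_cases i <;> assumption)
    · refine summable_int_of_half_lines (m := xm - 1) (p := xp + 1) (by omega) ?_ ?_
      · refine summable_norm_sq_of_geometric (c := ζp)
          (w := R (a xp) (ζp * Φ (xp + 1) 0) (Φ (xp + 1) 1)) (fun n => ?_) hζp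
        have h := hΦp (n + 1)
        rw [Nat.cast_succ, ← add_assoc] at h
        beta_reduce
        rw [hCp _ (by omega), h, hΦp, ← hRsmul, pow_succ]
        simp only [Pi.smul_apply, smul_eq_mul, mul_assoc]
      · refine summable_norm_sq_of_geometric (c := ζm⁻¹)
          (w := R (a (xm - 1)) (vm 0) (ζm⁻¹ * vm 1)) (fun n => ?_)
          (by rw [norm_inv]; exact inv_lt_one_of_one_lt₀ hζm)
        have h := hΦm (n + 1)
        rw [Nat.cast_succ, add_comm (n : ℤ), ← sub_sub] at h
        beta_reduce
        rw [hCm (xm - 1 - n) (by omega), h, show xm - 1 - (n : ℤ) + 1 = xm - n by ring, hΦm,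
          ← hRsmul, pow_succ]
        simp only [Pi.smul_apply, smul_eq_mul, mul_assoc]
    · simpa [hR] using (hsite (x + 1)).1
    · have h := (hsite (x - 1)).2.2
      rw [sub_add_cancel] at h
      simpa [hR] using h
end
end

section
/- Consider the one-defect three-state quantum walk: C_x = C for x ≠ 0 and C_0 at x = 0, where C = (a^{(i,j)}) and C_0 = (a_0^{(i,j)}) are 3×3 unitary matrices with |a^{(1,3)}|, |a^{(2,2)}|, |a^{(3,1)}|, |a_0^{(1,3)}|, |a_0^{(2,2)}|, |a_0^{(3,1)}| ≠ 1, and let λ ∈ [0,2π) with e^{iλ} ≠ a^{(2,2)} and e^{iλ} ≠ a_0^{(2,2)}. Then e^{iλ} is an eigenvalue of U if and only if there exists a nonzero Ψ̃ : ℤ → ℂ² satisfying Conditions 1 and 2. Condition 1: if A_0(λ) ≠ 0 then Ψ̃(1) = T_0(λ)Ψ̃(0); if A_0(λ) = 0 then Ψ̃(0) = k₁·(a_0^{(3,3)} conj(a_0^{(3,2)}), conj(a_0^{(1,1)}) a_0^{(2,1)})ᵗ and Ψ̃(1) = k₂·(conj(a_0^{(1,1)}) a_0^{(1,2)}, a_0^{(3,3)}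 conj(a_0^{(2,3)}))ᵗ for some k₁, k₂ ∈ ℂ. Condition 2: if A(λ) ≠ 0 then |tr T(λ)| > 2, Ψ̃(x+1) = T(λ)Ψ̃(x) for all x ≥ 1 and all x < 0, T(λ)Ψ̃(1) = ζ Ψ̃(1) for the eigenvalue ζ of T(λ) with |ζ| < 1, and T(λ)Ψ̃(0) = ζ' Ψ̃(0) for the eigenvalue ζ' of T(λ) with |ζ'| > 1; if A(λ) = 0 then Ψ̃(0) = k₁·(conj(a^{(1,1)}) a^{(1,2)}, a^{(3,3)} conj(a^{(2,3)}))ᵗ and Ψ̃(1) = k₂·(a^{(3,3)} conj(a^{(3,2)}), conj(a^{(1,1)}) a^{(2,1)})ᵗ for some k₁, k₂ ∈ ℂ, and for each x ≠ 0, 1: Ψ̃(x) = k_x·(a^{(3,3)} conj(a^{(3,2)}), conj(a^{(1,1)}) a^{(2,1)})ᵗ for some k_x ∈ ℂ if (a^{(3,3)}/conj(a^{(1,1)}))² = a^{(1,2)} a^{(2,1)}/(conj(a^{(3,2)}) conj(a^{(2,3)})), and Ψ̃(x) = 0 otherwise, with k_x ≠ 0 for only finitely many x. -/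
open Complex Matrix ComplexConjugate

noncomputable section

/-- The vector `(a^{(3,3)} conj a^{(3,2)}, conj a^{(1,1)} a^{(2,1)})ᵗ`. -/
def vecA (M : Matrix (Fin 3) (Fin 3) ℂ) : Fin 2 → ℂ :=
  ![M 2 2 * conj (M 2 1), conj (M 0 0) * M 1 0]

/-- The vector `(conj a^{(1,1)} a^{(1,2)}, a^{(3,3)} conj a^{(2,3)})ᵗ`. -/
def vecB (M : Matrix (Fin 3) (Fin 3) ℂ) : Fin 2 → ℂ :=
  ![conj (M 0 0) * M 0 1, M 2 2 * conj (M 1 2)]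

/-- The condition `(a^{(3,3)}/conj a^{(1,1)})² = a^{(1,2)}a^{(2,1)}/(conj a^{(3,2)} conj a^{(2,3)})`. -/
def algCond (M : Matrix (Fin 3) (Fin 3) ℂ) : Prop :=
  (M 2 2 / conj (M 0 0)) ^ 2 = M 0 1 * M 1 0 / (conj (M 2 1) * conj (M 1 2))

/-- The Schur complement entry `(i, j)` left after eliminating the middle component. -/
def schurEntry (M : Matrix (Fin 3) (Fin 3) ℂ) (μ : ℂ) (i j : Fin 3) : ℂ :=
  M i j + M i 1 * M 1 j / (μ - M 1 1)

/-- The relation imposed by the eigenvalue equation at a site with coin `M` on the reduced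
amplitudes `p = (Ψ₁(x-1), Ψ₃(x))` and `q = (Ψ₁(x), Ψ₃(x+1))` around that site. -/
def SiteRel (M : Matrix (Fin 3) (Fin 3) ℂ) (μ : ℂ) (p q : Fin 2 → ℂ) : Prop :=
  μ * p 0 = schurEntry M μ 0 0 * q 0 + schurEntry M μ 0 2 * p 1 ∧
    μ * q 1 = schurEntry M μ 2 0 * q 0 + schurEntry M μ 2 2 * p 1

section Coin

variable {M : Matrix (Fin 3) (Fin 3) ℂ} {μ : ℂ}

lemma adjugate_eq_of_mem_unitaryGroup (hM : M ∈ Matrix.unitaryGroup (Fin 3) ℂ) :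
    M.adjugate = M.det • Mᴴ := by
  have h : M * Mᴴ = 1 := Matrix.mem_unitaryGroup_iff.1 hM
  calc M.adjugate = M.adjugate * (M * Mᴴ) := by rw [h, mul_one]
    _ = M.det • Mᴴ := by rw [← mul_assoc, Matrix.adjugate_mul, smul_mul_assoc, one_mul]

lemma cofactors_of_mem_unitaryGroup (hM : M ∈ Matrix.unitaryGroup (Fin 3) ℂ) :
    M 1 1 * M 2 2 - M 1 2 * M 2 1 = M.det * conj (M 0 0) ∧
    M 0 0 * M 1 1 - M 0 1 * M 1 0 = M.det * conj (M 2 2) ∧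
    M 0 0 * M 2 2 - M 0 2 * M 2 0 = M.det * conj (M 1 1) ∧
    M 0 1 * M 1 2 - M 0 2 * M 1 1 = M.det * conj (M 2 0) ∧
    M 1 0 * M 2 1 - M 1 1 * M 2 0 = M.det * conj (M 0 2) ∧
    M 0 1 * M 2 0 - M 0 0 * M 2 1 = M.det * conj (M 1 2) ∧
    M 0 2 * M 1 0 - M 0 0 * M 1 2 = M.det * conj (M 2 1) := by
  have h := adjugate_eq_of_mem_unitaryGroup hM
  have key : ∀ i j, M.adjugate i j = M.det * conj (M j i) := fun i j => by
    rw [h]; simp [Matrix.conjTranspose_apply]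
  refine ⟨?_, ?_, ?_, ?_, ?_, ?_, ?_⟩
  · rw [← key 0 0, Matrix.adjugate_fin_three]; simp
  · rw [← key 2 2, Matrix.adjugate_fin_three]; simp
  · rw [← key 1 1, Matrix.adjugate_fin_three]; simp
  · rw [← key 0 2, Matrix.adjugate_fin_three]; simp
  · rw [← key 2 0, Matrix.adjugate_fin_three]; simp
  · rw [← key 2 1, Matrix.adjugate_fin_three]; simp; ring
  · rw [← key 1 2, Matrix.adjugate_fin_three]; simp; ring

lemma det_mul_conj_det (hM : M ∈ Matrix.unitaryGroup (Fin 3) ℂ) : M.det * conj M.det = 1 := by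
  have h := congrArg Matrix.det (Matrix.mem_unitaryGroup_iff.1 hM)
  rwa [Matrix.det_mul, Matrix.star_eq_conjTranspose, Matrix.det_conjTranspose,
    Matrix.det_one] at h

lemma row_zero_ne (hM : M ∈ Matrix.unitaryGroup (Fin 3) ℂ) (h13 : ‖M 0 2‖ ≠ 1)
    (h0 : M 0 0 = 0) : M 0 1 ≠ 0 := by
  intro h1
  have h := congrFun (congrFun (Matrix.mem_unitaryGroup_iff.1 hM) 0) 0
  simp [Matrix.mul_apply, Fin.sum_univ_three, h0, h1, Complex.mul_conj,
    Matrix.star_apply] at h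
  rw [Complex.normSq_eq_norm_sq] at h
  apply h13
  have h' : ‖M 0 2‖ ^ 2 = 1 := by exact_mod_cast h
  exact (pow_eq_one_iff_of_nonneg (norm_nonneg _) two_ne_zero).1 h'

lemma col_zero_ne (hM : M ∈ Matrix.unitaryGroup (Fin 3) ℂ) (h31 : ‖M 2 0‖ ≠ 1)
    (h0 : M 0 0 = 0) : M 1 0 ≠ 0 := by
  refine row_zero_ne (M := Mᵀ) ?_ h31 h0
  rw [Matrix.mem_unitaryGroup_iff]
  have h := congrArg Matrix.transpose (Matrix.mem_unitaryGroup_iff'.1 hM)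
  rw [Matrix.transpose_mul, Matrix.transpose_one] at h
  exact h

lemma schurEntry_mul_sub (hne : μ ≠ M 1 1) (i j : Fin 3) :
    schurEntry M μ i j * (μ - M 1 1) = M i j * (μ - M 1 1) + M i 1 * M 1 j := by
  have : μ - M 1 1 ≠ 0 := sub_ne_zero.2 hne
  unfold schurEntry
  field_simp

lemma schurEntry_zero_zero_mul (hM : M ∈ Matrix.unitaryGroup (Fin 3) ℂ) (hne : μ ≠ M 1 1) :
    schurEntry M μ 0 0 * (μ - M 1 1) = M 0 0 * μ - M.det * conj (M 2 2) := by
  rw [schurEntry_mul_sub hne, ← (cofactors_of_mem_unitaryGroup hM).2.1]; ring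

lemma schurEntry_two_two_mul (hM : M ∈ Matrix.unitaryGroup (Fin 3) ℂ) (hne : μ ≠ M 1 1) :
    schurEntry M μ 2 2 * (μ - M 1 1) = M 2 2 * μ - M.det * conj (M 0 0) := by
  rw [schurEntry_mul_sub hne, ← (cofactors_of_mem_unitaryGroup hM).1]; ring

lemma schurEntry_zero_two_mul (hM : M ∈ Matrix.unitaryGroup (Fin 3) ℂ) (hne : μ ≠ M 1 1) :
    schurEntry M μ 0 2 * (μ - M 1 1) = M 0 2 * μ + M.det * conj (M 2 0) := by
  rw [schurEntry_mul_sub hne, ← (cofactors_of_mem_unitaryGroup hM).2.2.2.1]; ring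

lemma schurEntry_two_zero_mul (hM : M ∈ Matrix.unitaryGroup (Fin 3) ℂ) (hne : μ ≠ M 1 1) :
    schurEntry M μ 2 0 * (μ - M 1 1) = M 2 0 * μ + M.det * conj (M 0 2) := by
  rw [schurEntry_mul_sub hne, ← (cofactors_of_mem_unitaryGroup hM).2.2.2.2.1]; ring

lemma schur_det_mul (hM : M ∈ Matrix.unitaryGroup (Fin 3) ℂ) (hμ : μ * conj μ = 1)
    (hne : μ ≠ M 1 1) :
    (schurEntry M μ 0 0 * schurEntry M μ 2 2 - schurEntry M μ 0 2 * schurEntry M μ 2 0) *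
      (μ - M 1 1) = -(M.det * μ * (conj μ - conj (M 1 1))) := by
  have he : μ - M 1 1 ≠ 0 := sub_ne_zero.2 hne
  have h1 := (cofactors_of_mem_unitaryGroup hM).2.2.1
  have hd : M.det * μ * (conj μ - conj (M 1 1)) = M.det - μ * (M.det * conj (M 1 1)) := by
    linear_combination M.det * hμ
  rw [hd, ← h1, Matrix.det_fin_three]
  unfold schurEntry
  field_simp
  ring

lemma schurEntry_two_two_eq (hM : M ∈ Matrix.unitaryGroup (Fin 3) ℂ) (hμ : μ * conj μ = 1)
    (hne : μ ≠ M 1 1) :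
    schurEntry M μ 2 2 * (μ - M 1 1) =
      -(M.det * μ * conj (schurEntry M μ 0 0 * (μ - M 1 1))) := by
  rw [schurEntry_two_two_mul hM hne, schurEntry_zero_zero_mul hM hne]
  simp only [map_sub, map_mul, Complex.conj_conj]
  linear_combination (-M 2 2 * μ) * det_mul_conj_det hM + M.det * conj (M 0 0) * hμ

lemma schurEntry_two_two_eq_zero (hM : M ∈ Matrix.unitaryGroup (Fin 3) ℂ) (hμ : μ * conj μ = 1)
    (hne : μ ≠ M 1 1)
    (hA : schurEntry M μ 0 0 = 0) : schurEntry M μ 2 2 = 0 := by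
  have h := schurEntry_two_two_eq hM hμ hne
  simpa [hA, sub_ne_zero.2 hne] using h

lemma coin_entries_ne_zero (hM : M ∈ Matrix.unitaryGroup (Fin 3) ℂ) (hne : μ ≠ M 1 1)
    (hμ : μ * conj μ = 1) (h13 : ‖M 0 2‖ ≠ 1) (h31 : ‖M 2 0‖ ≠ 1)
    (hA : schurEntry M μ 0 0 = 0) :
    M 0 0 ≠ 0 ∧ M 2 2 ≠ 0 ∧ M 0 1 ≠ 0 ∧ M 1 0 ≠ 0 ∧ M 1 2 ≠ 0 ∧ M 2 1 ≠ 0 := by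
  have hD := schurEntry_two_two_eq_zero hM hμ hne hA
  have hA' := schurEntry_zero_zero_mul hM hne
  have hD' := schurEntry_two_two_mul hM hne
  have hA'' := schurEntry_mul_sub hne 0 0
  have hμ0 : μ ≠ 0 := by rintro rfl; simp at hμ
  have hdet : M.det ≠ 0 := by intro h; simpa [h] using det_mul_conj_det hM
  rw [hA, zero_mul] at hA' hA''
  rw [hD, zero_mul] at hD'
  have h00 : M 0 0 ≠ 0 := by
    intro h
    have h1 := row_zero_ne hM h13 h
    have h2 := col_zero_ne hM h31 h
    simp [h, h1, h2] at hA''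
  have h22 : M 2 2 ≠ 0 := by
    intro h
    simp [h, hdet, h00] at hD'
  refine ⟨h00, h22, ?_, ?_, ?_, ?_⟩ <;> intro h
  · exact h00 (by simpa [schurEntry, h] using hA)
  · exact h00 (by simpa [schurEntry, h] using hA)
  · exact h22 (by simpa [schurEntry, h] using hD)
  · exact h22 (by simpa [schurEntry, h] using hD)

lemma schur_unitary (hM : M ∈ Matrix.unitaryGroup (Fin 3) ℂ) (hμ : μ * conj μ = 1)
    (hne : μ ≠ M 1 1) :
    ∃ δ : ℂ, δ * conj δ = 1 ∧
      schurEntry M μ 0 0 * schurEntry M μ 2 2 - schurEntry M μ 0 2 * schurEntry M μ 2 0 = δ ∧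
      schurEntry M μ 2 2 = δ * conj (schurEntry M μ 0 0) := by
  have he : μ - M 1 1 ≠ 0 := sub_ne_zero.2 hne
  have h1 := schur_det_mul hM hμ hne
  have h2 := schurEntry_two_two_eq hM hμ hne
  refine ⟨_, ?_, rfl, ?_⟩
  · set δ := schurEntry M μ 0 0 * schurEntry M μ 2 2 - schurEntry M μ 0 2 * schurEntry M μ 2 0
    have h3 := congrArg conj h1
    have hce : conj (μ - M 1 1) ≠ 0 := (map_ne_zero _).2 he
    apply mul_right_cancel₀ (mul_ne_zero he hce)
    simp only [map_neg, map_sub, map_mul, Complex.conj_conj] at h3 ⊢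
    calc δ * conj δ * ((μ - M 1 1) * (conj μ - conj (M 1 1)))
        = (δ * (μ - M 1 1)) * (conj δ * (conj μ - conj (M 1 1))) := by ring
      _ = (M.det * conj M.det) * (μ * conj μ) * ((μ - M 1 1) * (conj μ - conj (M 1 1))) := by
        rw [h1, h3]; ring
      _ = _ := by rw [det_mul_conj_det hM, hμ]; ring
  · apply mul_right_cancel₀ he
    rw [h2]
    simp only [map_sub, map_mul]
    linear_combination (-conj (schurEntry M μ 0 0)) * h1

lemma siteRel_iff_of_eq_zero (hM : M ∈ Matrix.unitaryGroup (Fin 3) ℂ) (hμ : μ * conj μ = 1)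
    (hne : μ ≠ M 1 1) (h13 : ‖M 0 2‖ ≠ 1) (h31 : ‖M 2 0‖ ≠ 1) (hA : schurEntry M μ 0 0 = 0)
    (p q : Fin 2 → ℂ) :
    SiteRel M μ p q ↔ (∃ k : ℂ, p = k • vecA M) ∧ ∃ k : ℂ, q = k • vecB M := by
  obtain ⟨h00, h22, h01, h10, h12, h21⟩ := coin_entries_ne_zero hM hne hμ h13 h31 hA
  have hD := schurEntry_two_two_eq_zero hM hμ hne hA
  have he : μ - M 1 1 ≠ 0 := sub_ne_zero.2 hne
  have hμ0 : μ ≠ 0 := by rintro rfl; simp at hμ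
  have hc00 : conj (M 0 0) ≠ 0 := (map_ne_zero _).2 h00
  have hA' := schurEntry_mul_sub hne 0 0
  have hD' := schurEntry_two_two_mul hM hne
  rw [hA, zero_mul] at hA'
  rw [hD, zero_mul] at hD'
  obtain ⟨-, -, -, -, -, c12, c21⟩ := cofactors_of_mem_unitaryGroup hM
  have hB : schurEntry M μ 0 2 * (conj (M 0 0) * M 1 0) = μ * (M 2 2 * conj (M 2 1)) := by
    have h : schurEntry M μ 0 2 * M 1 0 = M.det * conj (M 2 1) := by
      apply mul_left_cancel₀ h01
      rw [← c21]
      linear_combination (-M 0 0) * schurEntry_mul_sub hne 0 2 +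
        (M 0 2 - schurEntry M μ 0 2) * hA'
    linear_combination conj (M 0 0) * h + conj (M 2 1) * hD'
  have hC : schurEntry M μ 2 0 * (conj (M 0 0) * M 0 1) = μ * (M 2 2 * conj (M 1 2)) := by
    have h : schurEntry M μ 2 0 * M 0 1 = M.det * conj (M 1 2) := by
      apply mul_left_cancel₀ h10
      rw [← c12]
      linear_combination (-M 0 0) * schurEntry_mul_sub hne 2 0 +
        (M 2 0 - schurEntry M μ 2 0) * hA'
    linear_combination conj (M 0 0) * h + conj (M 1 2) * hD'
  unfold SiteRel
  rw [hA, hD]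
  refine and_congr ⟨fun h => ?_, ?_⟩ ⟨fun h => ?_, ?_⟩
  · refine ⟨p 1 / (conj (M 0 0) * M 1 0), ?_⟩
    have h0 : p 0 = p 1 / (conj (M 0 0) * M 1 0) * (M 2 2 * conj (M 2 1)) := by
      rw [div_mul_eq_mul_div, eq_div_iff (mul_ne_zero hc00 h10)]
      apply mul_left_cancel₀ hμ0
      linear_combination (conj (M 0 0) * M 1 0) * h + p 1 * hB
    ext i
    fin_cases i
    · simpa [vecA] using h0
    · simp [vecA]; field_simp
  · rintro ⟨k, rfl⟩
    simp only [vecA, Pi.smul_apply, smul_eq_mul, Matrix.cons_val_zero, Matrix.cons_val_one]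
    linear_combination (-k) * hB
  · refine ⟨q 0 / (conj (M 0 0) * M 0 1), ?_⟩
    have h0 : q 1 = q 0 / (conj (M 0 0) * M 0 1) * (M 2 2 * conj (M 1 2)) := by
      rw [div_mul_eq_mul_div, eq_div_iff (mul_ne_zero hc00 h01)]
      apply mul_left_cancel₀ hμ0
      linear_combination (conj (M 0 0) * M 0 1) * h + q 0 * hC
    ext i
    fin_cases i
    · simp [vecB]; field_simp
    · simpa [vecB] using h0
  · rintro ⟨k, rfl⟩
    simp only [vecB, Pi.smul_apply, smul_eq_mul, Matrix.cons_val_zero, Matrix.cons_val_one]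
    linear_combination (-k) * hC

lemma algCond_iff (h00 : M 0 0 ≠ 0) (h12 : M 1 2 ≠ 0) (h21 : M 2 1 ≠ 0) :
    algCond M ↔ vecA M 0 * vecB M 1 = vecA M 1 * vecB M 0 := by
  have hc00 : conj (M 0 0) ≠ 0 := (map_ne_zero _).2 h00
  have hc12 : conj (M 1 2) ≠ 0 := (map_ne_zero _).2 h12
  have hc21 : conj (M 2 1) ≠ 0 := (map_ne_zero _).2 h21
  unfold algCond
  rw [div_pow, div_eq_div_iff (pow_ne_zero 2 hc00) (mul_ne_zero hc21 hc12)]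
  simp only [vecA, vecB, Matrix.cons_val_zero, Matrix.cons_val_one]
  constructor <;> intro h <;> linear_combination h

end Coin

section Transfer

variable {M : Matrix (Fin 3) (Fin 3) ℂ} {lam : ℝ}

lemma exp_mul_conj_exp (lam : ℝ) :
    Complex.exp (lam * Complex.I) * conj (Complex.exp (lam * Complex.I)) = 1 := by
  rw [Complex.mul_conj, Complex.normSq_eq_norm_sq, Complex.norm_exp_ofReal_mul_I]; simp

lemma transfer_eq_s15 (hM : M ∈ Matrix.unitaryGroup (Fin 3) ℂ)
    (hne : Complex.exp (lam * Complex.I) ≠ M 1 1) {μ A B C D : ℂ}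
    (hμ : Complex.exp (lam * Complex.I) = μ) (hA : schurEntry M μ 0 0 = A)
    (hB : schurEntry M μ 0 2 = B) (hC : schurEntry M μ 2 0 = C) (hD : schurEntry M μ 2 2 = D)
    (hA0 : A ≠ 0) :
    transfer M lam = !![μ / A, -(B / A); C / A, (A * D - B * C) / (A * μ)] := by
  have hμ1 : μ * conj μ = 1 := hμ ▸ exp_mul_conj_exp lam
  have hμ0 : μ ≠ 0 := hμ ▸ Complex.exp_ne_zero _
  rw [hμ] at hne
  have he : μ - M 1 1 ≠ 0 := sub_ne_zero.2 hne
  have hinv : Complex.exp (-(lam * Complex.I)) = conj μ := by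
    rw [Complex.exp_neg, hμ]; exact (eq_inv_of_mul_eq_one_right hμ1).symm
  have h1 := schurEntry_zero_zero_mul hM hne
  have h2 := schurEntry_zero_two_mul hM hne
  have h3 := schurEntry_two_zero_mul hM hne
  have h4 := schur_det_mul hM hμ1 hne
  rw [hA] at h1
  rw [hB] at h2
  rw [hC] at h3
  rw [hA, hB, hC, hD] at h4
  unfold transfer
  rw [hinv, hμ, ← h1]
  ext i j
  fin_cases i <;> fin_cases j <;> simp
  · field_simp
  · field_simp
    linear_combination h2
  · rw [← h3]; field_simp
  · field_simp
    linear_combination -h4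

lemma siteRel_iff_transfer (hM : M ∈ Matrix.unitaryGroup (Fin 3) ℂ)
    (hne : Complex.exp (lam * Complex.I) ≠ M 1 1)
    (hA : schurEntry M (Complex.exp (lam * Complex.I)) 0 0 ≠ 0) (p q : Fin 2 → ℂ) :
    SiteRel M (Complex.exp (lam * Complex.I)) p q ↔ (transfer M lam).mulVec p = q := by
  rw [transfer_eq_s15 hM hne rfl rfl rfl rfl rfl hA]
  have hμ0 := Complex.exp_ne_zero (lam * Complex.I)
  unfold SiteRel
  set μ := Complex.exp (lam * Complex.I)
  generalize schurEntry M μ 0 0 = A, schurEntry M μ 0 2 = B, schurEntry M μ 2 0 = C,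
    schurEntry M μ 2 2 = D at *
  constructor
  · rintro ⟨h1, h2⟩
    ext i
    fin_cases i
    · simp [Matrix.vecHead, Matrix.vecTail]
      field_simp
      linear_combination h1
    · simp [Matrix.vecHead, Matrix.vecTail]
      field_simp
      linear_combination C * h1 - A * h2
  · rintro rfl
    simp [Matrix.vecHead, Matrix.vecTail]
    constructor <;> field_simp <;> ring

lemma transfer_det_trace (hM : M ∈ Matrix.unitaryGroup (Fin 3) ℂ)
    (hne : Complex.exp (lam * Complex.I) ≠ M 1 1)
    (hA : schurEntry M (Complex.exp (lam * Complex.I)) 0 0 ≠ 0) :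
    (transfer M lam).det * conj (transfer M lam).det = 1 ∧
      (transfer M lam).det * conj (transfer M lam).trace = (transfer M lam).trace := by
  have hμ := exp_mul_conj_exp lam
  obtain ⟨δ, hδ, hdet, hD⟩ := schur_unitary hM hμ hne
  rw [transfer_eq_s15 hM hne rfl rfl rfl rfl rfl hA, hdet, Matrix.det_fin_two_of,
    Matrix.trace_fin_two_of]
  have hμ0 := Complex.exp_ne_zero (lam * Complex.I)
  set μ := Complex.exp (lam * Complex.I)
  have hcμ : conj μ = μ⁻¹ := eq_inv_of_mul_eq_one_right hμ
  have hδ0 : δ ≠ 0 := by rintro rfl; simp at hδ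
  have hcδ : conj δ = δ⁻¹ := eq_inv_of_mul_eq_one_right hδ
  generalize schurEntry M μ 0 0 = A, schurEntry M μ 0 2 = B, schurEntry M μ 2 0 = C,
    schurEntry M μ 2 2 = D at *
  have hcA : conj A ≠ 0 := (map_ne_zero _).2 hA
  have hd : μ / A * (δ / (A * μ)) - -(B / A) * (C / A) = δ * conj A / A := by
    field_simp
    linear_combination (-1 : ℂ) * hdet + A * hD
  rw [hd]
  simp only [map_div₀, map_mul, map_add, Complex.conj_conj, hcμ, hcδ]
  constructor <;> field_simp
  ring

end Transfer

section Dynamics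

lemma exists_roots_of_norm_eq_one {t d : ℂ} (hd : ‖d‖ = 1) :
    ∃ z w : ℂ, z + w = t ∧ z * w = d ∧ ‖z‖ ≤ 1 ∧ 1 ≤ ‖w‖ := by
  obtain ⟨s, hs⟩ := IsAlgClosed.exists_pow_nat_eq (t ^ 2 - 4 * d) two_pos
  have h1 : (t + s) / 2 + (t - s) / 2 = t := by ring
  have h2 : (t + s) / 2 * ((t - s) / 2) = d := by linear_combination (-1 / 4 : ℂ) * hs
  generalize (t + s) / 2 = z, (t - s) / 2 = w at h1 h2
  have h3 : ‖z‖ * ‖w‖ = 1 := by rw [← norm_mul, h2, hd]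
  rcases le_total ‖z‖ 1 with h | h
  · exact ⟨z, w, h1, h2, h, by nlinarith [norm_nonneg w]⟩
  · exact ⟨w, z, by rw [add_comm, h1], by rw [mul_comm, h2],
      by nlinarith [norm_nonneg w], h⟩

lemma two_lt_norm_of_root {t d ζ : ℂ} (hd : d * conj d = 1) (ht : d * conj t = t)
    (hζ : ζ ^ 2 - t * ζ + d = 0) (h1 : ‖ζ‖ ≠ 1) : 2 < ‖t‖ := by
  have hd0 : d ≠ 0 := by rintro rfl; simp at hd
  have hζ0 : ζ ≠ 0 := by rintro rfl; simp [hd0] at hζ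
  have hc0 : conj ζ ≠ 0 := (map_ne_zero _).2 hζ0
  have hconj := congrArg conj hζ
  simp only [map_add, map_sub, map_mul, map_pow, map_zero] at hconj
  have hn : ζ * conj ζ = (‖ζ‖ ^ 2 : ℝ) := by
    rw [Complex.mul_conj, Complex.normSq_eq_norm_sq]
  have hn1 : ζ * conj ζ - 1 ≠ 0 := by
    rw [hn, sub_ne_zero]
    intro h
    exact h1 ((pow_eq_one_iff_of_nonneg (norm_nonneg _) two_ne_zero).1 (by exact_mod_cast h))
  have key : t * conj ζ = ζ * conj ζ + 1 := by
    apply mul_left_cancel₀ hn1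
    linear_combination (-conj ζ ^ 2) * hζ + d * hconj + conj ζ * ht - hd
  have hnorm : ‖t‖ * ‖ζ‖ = ‖ζ‖ ^ 2 + 1 := by
    have h := congrArg norm key
    rw [norm_mul, RCLike.norm_conj, hn] at h
    rw [h, ← Complex.ofReal_one, ← Complex.ofReal_add, Complex.norm_real, Real.norm_eq_abs,
      abs_of_pos (by positivity)]
  have hpos : 0 < ‖ζ‖ := norm_pos_iff.2 hζ0
  have : 0 < (‖ζ‖ - 1) ^ 2 := by
    have := sub_ne_zero.2 h1
    positivity
  nlinarith

lemma eq_zero_of_norm_le_succ {E : Type*} [NormedAddCommGroup E] {w : ℕ → E}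
    (hw : ∀ n, ‖w n‖ ≤ ‖w (n + 1)‖) (h0 : Filter.Tendsto w Filter.atTop (nhds 0)) :
    w 0 = 0 := by
  have hm : Monotone fun n => ‖w n‖ := monotone_nat_of_le_succ hw
  have h := hm.ge_of_tendsto (tendsto_zero_iff_norm_tendsto_zero.1 h0) 0
  exact norm_le_zero_iff.1 h

lemma mulVec_mulVec_fin_two {T : Matrix (Fin 2) (Fin 2) ℂ} {z w : ℂ} (h1 : z + w = T.trace)
    (h2 : z * w = T.det) (v : Fin 2 → ℂ) :
    T.mulVec (T.mulVec v) = (z + w) • T.mulVec v - (z * w) • v := by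
  rw [h1, h2, Matrix.trace_fin_two, Matrix.det_fin_two]
  ext i
  fin_cases i <;> simp [Matrix.mulVec, dotProduct, Fin.sum_univ_two] <;> ring

lemma root_of_add_of_mul {t d z w : ℂ} (h1 : z + w = t) (h2 : z * w = d) :
    z ^ 2 - t * z + d = 0 := by
  rw [← h1, ← h2]; ring

lemma mulVec_eq_smul_of_tendsto_forward {T : Matrix (Fin 2) (Fin 2) ℂ} {z w : ℂ}
    (h1 : z + w = T.trace) (h2 : z * w = T.det) (hw : 1 ≤ ‖w‖) {y : ℕ → Fin 2 → ℂ}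
    (hy : ∀ n, T.mulVec (y n) = y (n + 1)) (h0 : Filter.Tendsto y Filter.atTop (nhds 0)) :
    T.mulVec (y 0) = z • y 0 ∧ (y 0 ≠ 0 → ‖z‖ < 1) := by
  have hstep : ∀ n, y (n + 2) = (z + w) • y (n + 1) - (z * w) • y n := fun n => by
    rw [← hy (n + 1), ← hy n, mulVec_mulVec_fin_two h1 h2]
  have h0' := h0.comp (Filter.tendsto_add_atTop_nat 1)
  have hz : ∀ m, y (m + 1) = z • y m := by
    intro m
    have hm : Filter.Tendsto (fun n => y (m + n + 1) - z • y (m + n)) Filter.atTop (nhds 0) := by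
      have h : Filter.Tendsto (fun n => m + n) Filter.atTop Filter.atTop :=
        Filter.tendsto_atTop_mono (fun n => Nat.le_add_left n m) Filter.tendsto_id
      simpa using (h0'.comp h).sub ((h0.comp h).const_smul z)
    have hE := eq_zero_of_norm_le_succ (w := fun n => y (m + n + 1) - z • y (m + n))
      (fun n => ?_) hm
    · exact sub_eq_zero.1 hE
    · have : y (m + (n + 1) + 1) - z • y (m + (n + 1)) =
          w • (y (m + n + 1) - z • y (m + n)) := by
        rw [show m + (n + 1) + 1 = (m + n) + 2 by ring, hstep,
          show m + (n + 1) = m + n + 1 by ring]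
        module
      simp only [this, norm_smul]
      exact le_mul_of_one_le_left (norm_nonneg _) hw
  refine ⟨by rw [hy, hz], fun hne => ?_⟩
  by_contra hlt
  refine hne (eq_zero_of_norm_le_succ (fun n => ?_) h0)
  rw [hz, norm_smul]
  exact le_mul_of_one_le_left (norm_nonneg _) (not_lt.1 hlt)

lemma mulVec_eq_smul_of_tendsto_backward {T : Matrix (Fin 2) (Fin 2) ℂ} {z w : ℂ}
    (h1 : z + w = T.trace) (h2 : z * w = T.det) (hz : ‖z‖ ≤ 1) {y : ℕ → Fin 2 → ℂ}
    (hy : ∀ n, T.mulVec (y (n + 1)) = y n) (h0 : Filter.Tendsto y Filter.atTop (nhds 0)) :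
    T.mulVec (y 0) = w • y 0 ∧ (y 0 ≠ 0 → 1 < ‖w‖) := by
  have hstep : ∀ n, y n = (z + w) • y (n + 1) - (z * w) • y (n + 2) := fun n => by
    rw [← hy n, ← hy (n + 1), mulVec_mulVec_fin_two h1 h2]
  have h0' := h0.comp (Filter.tendsto_add_atTop_nat 1)
  have hw : ∀ m, y m = w • y (m + 1) := by
    intro m
    have hm : Filter.Tendsto (fun n => y (m + n) - w • y (m + n + 1)) Filter.atTop (nhds 0) := by
      have h : Filter.Tendsto (fun n => m + n) Filter.atTop Filter.atTop :=
        Filter.tendsto_atTop_mono (fun n => Nat.le_add_left n m) Filter.tendsto_id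
      simpa using (h0.comp h).sub ((h0'.comp h).const_smul w)
    have hE := eq_zero_of_norm_le_succ (w := fun n => y (m + n) - w • y (m + n + 1))
      (fun n => ?_) hm
    · exact sub_eq_zero.1 hE
    · have : y (m + n) - w • y (m + n + 1) =
          z • (y (m + (n + 1)) - w • y (m + (n + 1) + 1)) := by
        rw [hstep (m + n), show m + (n + 1) + 1 = (m + n) + 2 by ring,
          show m + (n + 1) = m + n + 1 by ring]
        module
      simp only [this, norm_smul]
      exact mul_le_of_le_one_left (norm_nonneg _) hz
  refine ⟨?_, fun hne => ?_⟩
  · have h := congrArg T.mulVec (hw 0)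
    rwa [Matrix.mulVec_smul, hy] at h
  by_contra hlt
  refine hne (eq_zero_of_norm_le_succ (fun n => ?_) h0)
  rw [hw n, norm_smul]
  exact mul_le_of_le_one_left (norm_nonneg _) (not_lt.1 hlt)

lemma summable_norm_sq_of_eq_smul {y : ℕ → Fin 2 → ℂ} {c : ℂ} (hc : ‖c‖ < 1)
    (hy : ∀ n, y (n + 1) = c • y n) : Summable fun n => ∑ i, ‖y n i‖ ^ 2 := by
  have h : ∀ n, ∑ i, ‖y n i‖ ^ 2 = (‖c‖ ^ 2) ^ n * ∑ i, ‖y 0 i‖ ^ 2 := by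
    intro n
    induction n with
    | zero => simp
    | succ n ih =>
      rw [pow_succ', mul_assoc, ← ih, hy, Finset.mul_sum]
      exact Finset.sum_congr rfl fun i _ => by
        rw [Pi.smul_apply, smul_eq_mul, norm_mul, mul_pow]
  rw [summable_congr h]
  exact (summable_geometric_of_lt_one (by positivity)
    (pow_lt_one₀ (norm_nonneg _) hc two_ne_zero)).mul_right _

end Dynamics

section Reduction

variable {a : ℤ → Matrix (Fin 3) (Fin 3) ℂ} {μ : ℂ}

lemma summable_norm_sq_apply {ι κ : Type*} [Fintype κ] {p : ι → κ → ℂ}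
    (hs : Summable fun x => ∑ i, ‖p x i‖ ^ 2) (i : κ) : Summable fun x => ‖p x i‖ ^ 2 :=
  hs.of_nonneg_of_le (fun x => by positivity) fun x =>
    Finset.single_le_sum (f := fun i => ‖p x i‖ ^ 2) (fun j _ => by positivity)
      (Finset.mem_univ i)

lemma isQWEigenvalue_iff_exists_siteRel (ha : (Set.range a).Finite)
    (hne : ∀ x, μ ≠ a x 1 1) :
    IsQWEigenvalue a μ ↔ ∃ p : ℤ → Fin 2 → ℂ, p ≠ 0 ∧
      (Summable fun x => ∑ i, ‖p x i‖ ^ 2) ∧ ∀ x, SiteRel (a x) μ (p x) (p (x + 1)) := by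
  have he : ∀ x, μ - a x 1 1 ≠ 0 := fun x => sub_ne_zero.2 (hne x)
  constructor
  · rintro ⟨Ψ, hΨ, hs, h⟩
    have hmid : ∀ x, Ψ x 1 = (a x 1 0 * Ψ x 0 + a x 1 2 * Ψ x 2) / (μ - a x 1 1) := fun x => by
      have h1 := (h x).2.1
      rw [Fin.sum_univ_three] at h1
      rw [eq_div_iff (he x)]
      linear_combination h1
    have hcomp : ∀ i, Summable fun x => ‖Ψ x i‖ ^ 2 := summable_norm_sq_apply hs
    refine ⟨fun x => ![Ψ (x - 1) 0, Ψ x 2], fun hp => hΨ ?_, ?_, fun x => ?_⟩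
    · have h0 : ∀ x, Ψ x 0 = 0 := fun x => by
        simpa using congrFun (congrFun hp (x + 1)) 0
      have h2 : ∀ x, Ψ x 2 = 0 := fun x => by simpa using congrFun (congrFun hp x) 1
      ext x i
      fin_cases i
      · exact h0 x
      · simpa [h0, h2] using hmid x
      · exact h2 x
    · simp only [Fin.sum_univ_two, Matrix.cons_val_zero, Matrix.cons_val_one]
      exact ((Equiv.subRight (1 : ℤ)).summable_iff.2 (hcomp 0)).add (hcomp 2)
    · have h0 := (h (x - 1)).1
      have h2 := (h (x + 1)).2.2
      have hm := hmid x
      rw [Fin.sum_univ_three] at h0 h2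
      simp only [sub_add_cancel, add_sub_cancel_right] at h0 h2
      simp only [SiteRel, schurEntry, Matrix.cons_val_zero, Matrix.cons_val_one,
        add_sub_cancel_right]
      rw [h0, h2, hm]
      constructor <;> ring
  · rintro ⟨p, hp, hs, h⟩
    have hcomp : ∀ i, Summable fun x => ‖p x i‖ ^ 2 := summable_norm_sq_apply hs
    have hs0 : Summable fun x => ‖p (x + 1) 0‖ ^ 2 :=
      (Equiv.addRight (1 : ℤ)).summable_iff.2 (hcomp 0)
    refine ⟨fun x => ![p (x + 1) 0,
      (a x 1 0 * p (x + 1) 0 + a x 1 2 * p x 1) / (μ - a x 1 1), p x 1],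
      fun hΨ => hp ?_, ?_, fun x => ?_⟩
    · ext x i
      fin_cases i
      · simpa using congrFun (congrFun hΨ (x - 1)) 0
      · simpa using congrFun (congrFun hΨ x) 2
    · obtain ⟨K, hK⟩ := (ha.image fun N => (‖N 1 0‖ ^ 2 + ‖N 1 2‖ ^ 2) /
        ‖μ - N 1 1‖ ^ 2).bddAbove
      have hmid : Summable fun x =>
          ‖(a x 1 0 * p (x + 1) 0 + a x 1 2 * p x 1) / (μ - a x 1 1)‖ ^ 2 := by
        refine ((hs0.add (hcomp 1)).mul_left K).of_nonneg_of_le (fun x => by positivity)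
          fun x => ?_
        have hx : (‖a x 1 0‖ ^ 2 + ‖a x 1 2‖ ^ 2) / ‖μ - a x 1 1‖ ^ 2 ≤ K :=
          hK ⟨a x, ⟨x, rfl⟩, rfl⟩
        refine le_trans ?_ (mul_le_mul_of_nonneg_right hx (by positivity))
        rw [norm_div, div_pow, div_mul_eq_mul_div]
        gcongr
        calc ‖a x 1 0 * p (x + 1) 0 + a x 1 2 * p x 1‖ ^ 2
            ≤ (‖a x 1 0‖ * ‖p (x + 1) 0‖ + ‖a x 1 2‖ * ‖p x 1‖) ^ 2 := by
              gcongr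
              exact (norm_add_le _ _).trans_eq (by rw [norm_mul, norm_mul])
          _ ≤ _ := by
              nlinarith [sq_nonneg (‖a x 1 0‖ * ‖p x 1‖ - ‖a x 1 2‖ * ‖p (x + 1) 0‖)]
      simp only [Fin.sum_univ_three]
      exact (hs0.add hmid).add (hcomp 1)
    · have h0 := (h (x + 1)).1
      have h2 := (h (x - 1)).2
      simp only [sub_add_cancel, schurEntry] at h0 h2
      simp only [Fin.sum_univ_three, Matrix.cons_val_zero, Matrix.cons_val_one,
        Matrix.cons_val, sub_add_cancel]
      refine ⟨?_, ?_, ?_⟩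
      · rw [h0]; ring
      · have := he x
        field_simp
        ring
      · rw [h2]; ring

end Reduction

section Defect

variable {M : Matrix (Fin 3) (Fin 3) ℂ} {lam : ℝ}

lemma siteRel_iff (hM : M ∈ Matrix.unitaryGroup (Fin 3) ℂ)
    (hne : Complex.exp (lam * Complex.I) ≠ M 1 1) (h13 : ‖M 0 2‖ ≠ 1) (h31 : ‖M 2 0‖ ≠ 1)
    (p q : Fin 2 → ℂ) :
    SiteRel M (Complex.exp (lam * Complex.I)) p q ↔
      (coefA M lam ≠ 0 → (transfer M lam).mulVec p = q) ∧
        (coefA M lam = 0 → (∃ k : ℂ, p = k • vecA M) ∧ ∃ k : ℂ, q = k • vecB M) := by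
  by_cases hA : coefA M lam = 0
  · simp only [hA, ne_eq, not_true_eq_false, false_imp_iff, true_imp_iff, true_and]
    exact siteRel_iff_of_eq_zero hM (exp_mul_conj_exp lam) hne h13 h31 hA p q
  · simp only [hA, ne_eq, not_false_eq_true, false_imp_iff, true_imp_iff, and_true]
    exact siteRel_iff_transfer hM hne hA p q

lemma tendsto_of_summable_norm_sq {p : ℤ → Fin 2 → ℂ}
    (hs : Summable fun x => ∑ i, ‖p x i‖ ^ 2) : Filter.Tendsto p Filter.cofinite (nhds 0) := by
  rw [tendsto_pi_nhds]
  intro i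
  have h : Filter.Tendsto (fun x => ‖p x i‖ ^ 2) Filter.cofinite (nhds 0) :=
    (summable_norm_sq_apply hs i).tendsto_cofinite_zero
  have h' := h.sqrt
  simp only [Real.sqrt_sq (norm_nonneg _), Real.sqrt_zero] at h'
  exact tendsto_zero_iff_norm_tendsto_zero.2 h'

/-- Square-summable solutions of the recursion `T p(x) = p(x+1)` off the origin, for `T` with the
determinant and trace symmetry of a transfer matrix, decay along eigenvectors of `T`. -/
lemma exists_siteRel_iff_transfer {T : Matrix (Fin 2) (Fin 2) ℂ}
    {R : (Fin 2 → ℂ) → (Fin 2 → ℂ) → Prop}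
    (hd : T.det * conj T.det = 1) (ht : T.det * conj T.trace = T.trace) :
    (∃ p : ℤ → Fin 2 → ℂ, p ≠ 0 ∧ (Summable fun x => ∑ i, ‖p x i‖ ^ 2) ∧
      R (p 0) (p 1) ∧ ∀ x, x ≠ 0 → T.mulVec (p x) = p (x + 1)) ↔
    ∃ p : ℤ → Fin 2 → ℂ, p ≠ 0 ∧ R (p 0) (p 1) ∧ 2 < ‖T.trace‖ ∧
      (∀ x : ℤ, 1 ≤ x → T.mulVec (p x) = p (x + 1)) ∧
      (∀ x : ℤ, x < 0 → T.mulVec (p x) = p (x + 1)) ∧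
      (∃ ζ : ℂ, ζ ^ 2 - T.trace * ζ + T.det = 0 ∧ ‖ζ‖ < 1 ∧ T.mulVec (p 1) = ζ • p 1) ∧
      ∃ ζ : ℂ, ζ ^ 2 - T.trace * ζ + T.det = 0 ∧ 1 < ‖ζ‖ ∧ T.mulVec (p 0) = ζ • p 0 := by
  have hdet : T.det ≠ 0 := by intro h; simp [h] at hd
  have hinj : Function.Injective T.mulVec :=
    Matrix.mulVec_injective_of_isUnit ((Matrix.isUnit_iff_isUnit_det T).2 hdet.isUnit)
  have hback : ∀ p : ℤ → Fin 2 → ℂ, (∀ x, x < 0 → T.mulVec (p x) = p (x + 1)) →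
      ∀ n : ℕ, T.mulVec (p (-((n + 1 : ℕ) : ℤ))) = p (-(n : ℤ)) := fun p h n => by
    rw [h _ (by omega)]; congr 1; push_cast; ring
  have hforw : ∀ p : ℤ → Fin 2 → ℂ, (∀ x, 1 ≤ x → T.mulVec (p x) = p (x + 1)) →
      ∀ n : ℕ, T.mulVec (p ((n : ℤ) + 1)) = p (((n + 1 : ℕ) : ℤ) + 1) := fun p h n => by
    rw [h _ (by omega)]; push_cast; rfl
  constructor
  · rintro ⟨p, hp, hs, hR, h⟩
    have hl := tendsto_of_summable_norm_sq hs
    have hf : ∀ x : ℤ, 1 ≤ x → T.mulVec (p x) = p (x + 1) := fun x hx => h x (by omega)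
    have hb : ∀ x : ℤ, x < 0 → T.mulVec (p x) = p (x + 1) := fun x hx => h x hx.ne
    have hnorm : ‖T.det‖ = 1 := by
      have := congrArg norm hd
      rw [norm_mul, RCLike.norm_conj, norm_one, ← sq] at this
      exact (pow_eq_one_iff_of_nonneg (norm_nonneg _) two_ne_zero).1 this
    obtain ⟨z, w, h1, h2, hz, hw⟩ := exists_roots_of_norm_eq_one (t := T.trace) hnorm
    have hzr := root_of_add_of_mul h1 h2
    have hwr := root_of_add_of_mul (by rw [add_comm, h1]) (by rw [mul_comm, h2]) (z := w) (w := z)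
      (t := T.trace) (d := T.det)
    have hi1 : Function.Injective fun n : ℕ => (n : ℤ) + 1 := fun m n h => by simpa using h
    have hi0 : Function.Injective fun n : ℕ => -(n : ℤ) := fun m n h => by simpa using h
    obtain ⟨e1, l1⟩ := mulVec_eq_smul_of_tendsto_forward h1 h2 hw
      (y := fun n : ℕ => p ((n : ℤ) + 1)) (hforw p hf)
      (Nat.cofinite_eq_atTop ▸ hl.comp hi1.tendsto_cofinite)
    obtain ⟨e0, l0⟩ := mulVec_eq_smul_of_tendsto_backward h1 h2 hz
      (y := fun n : ℕ => p (-(n : ℤ))) (hback p hb)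
      (Nat.cofinite_eq_atTop ▸ hl.comp hi0.tendsto_cofinite)
    simp only [Nat.cast_zero, zero_add, neg_zero] at e1 l1 e0 l0
    have hzw : ‖z‖ * ‖w‖ = 1 := by rw [← norm_mul, h2, hnorm]
    have hz1 : ‖z‖ < 1 := by
      by_cases hp1 : p 1 = 0
      · by_cases hp0 : p 0 = 0
        · refine absurd ?_ hp
          have hpos : ∀ n : ℕ, p ((n : ℤ) + 1) = 0 := fun n => by
            induction n with
            | zero => simpa using hp1
            | succ n ih => rw [← hforw p hf n, ih, Matrix.mulVec_zero]
          have hneg : ∀ n : ℕ, p (-(n : ℤ)) = 0 := fun n => by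
            induction n with
            | zero => simpa using hp0
            | succ n ih => exact hinj (by rw [hback p hb n, ih, Matrix.mulVec_zero])
          funext x
          rcases le_or_gt x 0 with hx | hx
          · have := hneg x.natAbs
            rwa [show -(x.natAbs : ℤ) = x by omega] at this
          · have := hpos (x.natAbs - 1)
            rwa [show ((x.natAbs - 1 : ℕ) : ℤ) + 1 = x by omega] at this
        · have := l0 hp0
          nlinarith [norm_nonneg z]
      · exact l1 hp1
    exact ⟨p, hp, hR, two_lt_norm_of_root hd ht hzr hz1.ne, hf, hb, ⟨z, hzr, hz1, e1⟩,
      w, hwr, by nlinarith [norm_nonneg w], e0⟩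
  · rintro ⟨p, hp, hR, -, hf, hb, ⟨z, -, hz1, hpz⟩, w, -, hw1, hpw⟩
    refine ⟨p, hp, ?_, hR, fun x hx => ?_⟩
    · have hw0 : w ≠ 0 := by rintro rfl; norm_num at hw1
      have hz : ∀ n : ℕ, p (((n + 1 : ℕ) : ℤ) + 1) = z • p ((n : ℤ) + 1) := fun n => by
        rw [← hforw p hf n]
        induction n with
        | zero => simpa using hpz
        | succ n ih => rw [← hforw p hf n, ih, Matrix.mulVec_smul, ih]
      have hw : ∀ n : ℕ, T.mulVec (p (-(n : ℤ))) = w • p (-(n : ℤ)) := fun n => by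
        induction n with
        | zero => simpa using hpw
        | succ n ih => exact hinj (by rw [Matrix.mulVec_smul, hback p hb n, ih])
      have hw' : ∀ n : ℕ, p (-((n + 1 : ℕ) : ℤ)) = w⁻¹ • p (-(n : ℤ)) := fun n => by
        rw [← hback p hb n, hw, smul_smul, inv_mul_cancel₀ hw0, one_smul]
      refine Summable.of_nat_of_neg ?_ ?_
      · rw [← summable_nat_add_iff 1]
        simpa using summable_norm_sq_of_eq_smul (y := fun n : ℕ => p ((n : ℤ) + 1)) hz1 hz
      · exact summable_norm_sq_of_eq_smul (y := fun n : ℕ => p (-(n : ℤ)))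
          (by rw [norm_inv]; exact inv_lt_one_of_one_lt₀ hw1) hw'
    · rcases lt_or_gt_of_ne hx with h | h
      · exact hb x h
      · exact hf x h

/-- When `A(λ) = 0` the sites decouple, so a square-summable solution can be truncated to a finitely
supported one. -/
lemma exists_siteRel_iff_of_eq_zero {R : (Fin 2 → ℂ) → (Fin 2 → ℂ) → Prop}
    (h00 : M 0 0 ≠ 0) (h22 : M 2 2 ≠ 0) (h10 : M 1 0 ≠ 0) (h12 : M 1 2 ≠ 0)
    (h21 : M 2 1 ≠ 0) :
    (∃ p : ℤ → Fin 2 → ℂ, p ≠ 0 ∧ (Summable fun x => ∑ i, ‖p x i‖ ^ 2) ∧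
      R (p 0) (p 1) ∧
      ∀ x, x ≠ 0 → (∃ k : ℂ, p x = k • vecA M) ∧ ∃ k : ℂ, p (x + 1) = k • vecB M) ↔
    ∃ p : ℤ → Fin 2 → ℂ, p ≠ 0 ∧ R (p 0) (p 1) ∧
      (∃ k : ℂ, p 0 = k • vecB M) ∧ (∃ k : ℂ, p 1 = k • vecA M) ∧
      (algCond M →
        (∀ x : ℤ, x ≠ 0 → x ≠ 1 → ∃ k : ℂ, p x = k • vecA M) ∧
        {x : ℤ | x ≠ 0 ∧ x ≠ 1 ∧ p x ≠ 0}.Finite) ∧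
      (¬ algCond M → ∀ x : ℤ, x ≠ 0 → x ≠ 1 → p x = 0) := by
  have hA1 : vecA M 1 ≠ 0 := by simp [vecA, h00, h10]
  have hB1 : vecB M 1 ≠ 0 := by simp [vecB, h22, h12]
  have halg := algCond_iff h00 h12 h21
  constructor
  · rintro ⟨p, hp, -, hR, h⟩
    obtain ⟨x₀, hx₀⟩ := Function.ne_iff.1 hp
    have hB : ∀ x, x ≠ 1 → ∃ k : ℂ, p x = k • vecB M := fun x hx => by
      simpa using (h (x - 1) (sub_ne_zero.2 hx)).2
    classical
    refine ⟨fun x => if x = 0 ∨ x = 1 ∨ x = x₀ then p x else 0, fun h0 => hx₀ ?_, ?_, ?_, ?_,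
      fun hc => ⟨fun x hx0 hx1 => ?_, ?_⟩, fun hc x hx0 hx1 => ?_⟩
    · simpa using congrFun h0 x₀
    · simpa using hR
    · simpa using hB 0 zero_ne_one
    · simpa using (h 1 one_ne_zero).1
    · dsimp only
      split_ifs with hx
      · exact (h x hx0).1
      · exact ⟨0, (zero_smul _ _).symm⟩
    · refine (Set.finite_singleton x₀).subset fun x ⟨hx0, hx1, hx⟩ => ?_
      by_contra hne
      exact hx (if_neg (by simpa [hx0, hx1] using hne))
    · dsimp only
      split_ifs with hx
      · obtain ⟨k, hk⟩ := (h x hx0).1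
        obtain ⟨l, hl⟩ := hB x hx1
        suffices hk0 : k = 0 by rw [hk, hk0, zero_smul]
        by_contra hk0
        have hl0 : l ≠ 0 := by
          rintro rfl
          have := congrFun (hk.symm.trans hl) 1
          simp [hk0, hA1] at this
        have e0 := congrFun (hk.symm.trans hl) 0
        have e1 := congrFun (hk.symm.trans hl) 1
        simp only [Pi.smul_apply, smul_eq_mul] at e0 e1
        refine hc (halg.2 (mul_left_cancel₀ (mul_ne_zero hk0 hl0) ?_))
        linear_combination l * vecB M 1 * e0 - l * vecB M 0 * e1
      · rfl
  · rintro ⟨p, hp, hR, hp0, hp1, hc, hnc⟩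
    have hfin : {x : ℤ | x ≠ 0 ∧ x ≠ 1 ∧ p x ≠ 0}.Finite := by
      by_cases h : algCond M
      · exact (hc h).2
      · exact Set.finite_empty.subset fun x ⟨hx0, hx1, hx⟩ => hx (hnc h x hx0 hx1)
    have hA : ∀ x, x ≠ 0 → ∃ k : ℂ, p x = k • vecA M := fun x hx0 => by
      by_cases hx1 : x = 1
      · exact hx1 ▸ hp1
      by_cases h : algCond M
      · exact (hc h).1 x hx0 hx1
      · exact ⟨0, by rw [hnc h x hx0 hx1, zero_smul]⟩
    have hB : ∀ x, x ≠ 1 → ∃ k : ℂ, p x = k • vecB M := fun x hx1 => by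
      by_cases hx0 : x = 0
      · exact hx0 ▸ hp0
      by_cases h : algCond M
      · obtain ⟨k, hk⟩ := (hc h).1 x hx0 hx1
        have hdet := halg.1 h
        refine ⟨k * vecA M 1 / vecB M 1, ?_⟩
        rw [hk]
        ext i
        fin_cases i
        · simp only [Fin.zero_eta, Pi.smul_apply, smul_eq_mul]
          field_simp
          linear_combination k * hdet
        · simp only [Fin.mk_one, Pi.smul_apply, smul_eq_mul]
          field_simp
      · exact ⟨0, by rw [hnc h x hx0 hx1, zero_smul]⟩
    refine ⟨p, hp, ?_, hR, fun x hx => ⟨hA x hx, hB (x + 1) (by omega)⟩⟩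
    have hfin' : (insert 0 (insert 1 {x : ℤ | x ≠ 0 ∧ x ≠ 1 ∧ p x ≠ 0})).Finite :=
      (hfin.insert 1).insert 0
    refine summable_of_ne_finset_zero (s := hfin'.toFinset) fun x hx => ?_
    simp only [Set.Finite.mem_toFinset, Set.mem_insert_iff, Set.mem_ofPred_eq, not_or, not_and,
      not_not] at hx
    simp [hx.2.2 hx.1 hx.2.1]

end Defect

/-- eigenvalue characterization for the one-defect three-state quantum
walk (coin `C₀` at the origin and `C` elsewhere). -/
theorem one_defect_eigenvalue_iff (a : ℤ → Matrix (Fin 3) (Fin 3) ℂ)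
    (M C₀ : Matrix (Fin 3) (Fin 3) ℂ)
    (hM : M ∈ Matrix.unitaryGroup (Fin 3) ℂ) (hC₀ : C₀ ∈ Matrix.unitaryGroup (Fin 3) ℂ)
    (h13 : ‖M 0 2‖ ≠ 1) (h22 : ‖M 1 1‖ ≠ 1) (h31 : ‖M 2 0‖ ≠ 1)
    (h13' : ‖C₀ 0 2‖ ≠ 1) (h22' : ‖C₀ 1 1‖ ≠ 1) (h31' : ‖C₀ 2 0‖ ≠ 1)
    (ha0 : a 0 = C₀) (hax : ∀ x : ℤ, x ≠ 0 → a x = M)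
    (lam : ℝ) (hlam : lam ∈ Set.Ico 0 (2 * Real.pi))
    (hne : Complex.exp (lam * Complex.I) ≠ M 1 1)
    (hne0 : Complex.exp (lam * Complex.I) ≠ C₀ 1 1) :
    IsQWEigenvalue a (Complex.exp (lam * Complex.I)) ↔
      ∃ Ψ : ℤ → Fin 2 → ℂ, Ψ ≠ 0 ∧
        -- Condition 1 (at the defect)
        ((coefA C₀ lam ≠ 0 → (transfer C₀ lam).mulVec (Ψ 0) = Ψ 1) ∧
         (coefA C₀ lam = 0 →
            (∃ k₁ : ℂ, Ψ 0 = k₁ • vecA C₀) ∧ (∃ k₂ : ℂ, Ψ 1 = k₂ • vecB C₀))) ∧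
        -- Condition 2 (away from the defect)
        ((coefA M lam ≠ 0 →
            2 < ‖(transfer M lam).trace‖ ∧
            (∀ x : ℤ, 1 ≤ x → (transfer M lam).mulVec (Ψ x) = Ψ (x + 1)) ∧
            (∀ x : ℤ, x < 0 → (transfer M lam).mulVec (Ψ x) = Ψ (x + 1)) ∧
            (∃ ζ : ℂ,
              ζ ^ 2 - (transfer M lam).trace * ζ + (transfer M lam).det = 0 ∧
              ‖ζ‖ < 1 ∧ (transfer M lam).mulVec (Ψ 1) = ζ • Ψ 1) ∧
            (∃ ζ : ℂ,
              ζ ^ 2 - (transfer M lam).trace * ζ + (transfer M lam).det = 0 ∧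
              1 < ‖ζ‖ ∧ (transfer M lam).mulVec (Ψ 0) = ζ • Ψ 0)) ∧
         (coefA M lam = 0 →
            (∃ k₁ : ℂ, Ψ 0 = k₁ • vecB M) ∧ (∃ k₂ : ℂ, Ψ 1 = k₂ • vecA M) ∧
            (algCond M →
              (∀ x : ℤ, x ≠ 0 → x ≠ 1 → ∃ k : ℂ, Ψ x = k • vecA M) ∧
              {x : ℤ | x ≠ 0 ∧ x ≠ 1 ∧ Ψ x ≠ 0}.Finite) ∧
            (¬ algCond M → ∀ x : ℤ, x ≠ 0 → x ≠ 1 → Ψ x = 0))) := by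
  have hrange : (Set.range a).Finite := by
    refine (Set.toFinite {C₀, M}).subset ?_
    rintro _ ⟨x, rfl⟩
    by_cases hx : x = 0
    · exact Or.inl (hx ▸ ha0)
    · exact Or.inr (hax x hx)
  have hne' : ∀ x, Complex.exp (lam * Complex.I) ≠ a x 1 1 := fun x => by
    by_cases hx : x = 0
    · rwa [hx, ha0]
    · rwa [hax x hx]
  have hsplit : ∀ p : ℤ → Fin 2 → ℂ,
      (∀ x, SiteRel (a x) (Complex.exp (lam * Complex.I)) (p x) (p (x + 1))) ↔
        SiteRel C₀ (Complex.exp (lam * Complex.I)) (p 0) (p 1) ∧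
          ∀ x, x ≠ 0 → SiteRel M (Complex.exp (lam * Complex.I)) (p x) (p (x + 1)) := fun p =>
    ⟨fun h => ⟨by simpa [ha0] using h 0, fun x hx => hax x hx ▸ h x⟩, fun h x => by
      by_cases hx : x = 0
      · simpa [hx, ha0] using h.1
      · exact (hax x hx).symm ▸ h.2 x hx⟩
  rw [isQWEigenvalue_iff_exists_siteRel hrange hne']
  simp only [hsplit, ← siteRel_iff hC₀ hne0 h13' h31']
  by_cases hA : coefA M lam = 0
  · obtain ⟨h00, h22, -, h10, h12, h21⟩ :=
      coin_entries_ne_zero hM hne (exp_mul_conj_exp lam) h13 h31 hA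
    simp only [siteRel_iff_of_eq_zero hM (exp_mul_conj_exp lam) hne h13 h31 hA, hA, ne_eq,
      not_true_eq_false, false_imp_iff, true_imp_iff, true_and]
    exact exists_siteRel_iff_of_eq_zero h00 h22 h10 h12 h21
      (R := SiteRel C₀ (Complex.exp (lam * Complex.I)))
  · obtain ⟨hd, ht⟩ := transfer_det_trace hM hne hA
    simp only [siteRel_iff_transfer hM hne hA, hA, ne_eq, not_false_eq_true, false_imp_iff,
      true_imp_iff, and_true]
    exact exists_siteRel_iff_transfer hd ht (R := SiteRel C₀ (Complex.exp (lam * Complex.I)))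
end
end
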